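/- arXiv:2503.05410 — 3 statements merged into one kernel-verified Lean document; each statement's English description precedes it below -/
import Mathlib

section
/- Let n ≥ 1, N ≥ 1, m ∈ ℝ, and let α¹, …, αⁿ, β be Hermitian N × N complex matrices satisfying αʲαᵏ + αᵏαʲ = 2δ_{jk}·Id, αʲβ + βαʲ = 0, and β² = Id. Let V : ℝⁿ × ℂᴺ → ℝ be real-valued, and let ψ be a global classical solution of i∂_tψ = −i Σ_{j=1}^n αʲ∂_jψ + (m + V(x,ψ))βψ on ℝ × ℝⁿ with values in ℂᴺ. Then for every j ∈ {1,…,n} and every b > 0, lim_{t→+∞} ∫_{{x ∈ ℝⁿ : |x_j| ≥ (1+b)t}} ψ(t,x)†ψ(t,x) dx = 0. -/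
open MeasureTheory Filter Matrix
open scoped Topology

/-!
The density `ρ = ψ†ψ` and the fluxes `Jₖ = ψ†αₖψ` satisfy the continuity equation
`∂ₜρ + ∑ ∂ₖJₖ = 0`: a Hermitian zeroth-order term, such as `(m + V)β`, drops out. Since `αₖ` is
Hermitian with square one, `|Jₖ| ≤ ρ`, so charge moves at speed at most one along each axis.
Hence `∫ W ρ` does not increase in time for a nonnegative weight `W` with `∂ₜW + ∑ |∂ₖW| ≤ 0`.
Cutoffs to boxes that shrink at unit speed are such weights, and so are their products with `W`:
they localise the integration by parts without an error term and are removed by monotone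
convergence. A weight that equals one where `|xⱼ| ≥ (1 + b)t` at time `t` and that at time `0` lives
on `√(1 + xⱼ²) ≥ bt - 1` thus bounds the exterior charge by a tail of the initial charge, which
vanishes as `t → ∞`.
-/

section SpatiallyCompactSupport

variable {E F : Type*} [NormedAddCommGroup E] [NormedAddCommGroup F]

/-- A function on space-time has spatially compact support if, locally uniformly in time, its time
slices vanish outside a common compact set. -/
def HasSpatiallyCompactSupport (G : ℝ × E → F) : Prop :=
  ∀ t, ∃ K : Set E, IsCompact K ∧ ∀ᶠ s in 𝓝 t, ∀ x ∉ K, G (s, x) = 0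

variable {G : ℝ × E → F}

namespace HasSpatiallyCompactSupport

theorem mul_right {f g : ℝ × E → ℝ} (hf : HasSpatiallyCompactSupport f) :
    HasSpatiallyCompactSupport fun p => f p * g p := fun t =>
  let ⟨K, hK, hzero⟩ := hf t
  ⟨K, hK, hzero.mono fun s hs x hx => by simp [hs x hx]⟩

theorem integrable_slice [MeasurableSpace E] {μ : Measure E}
    [OpensMeasurableSpace E] [IsFiniteMeasureOnCompacts μ]
    (hS : HasSpatiallyCompactSupport G) {t : ℝ} (hG : Continuous fun x => G (t, x)) :
    Integrable (fun x => G (t, x)) μ := by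
  obtain ⟨K, hK, hzero⟩ := hS t
  exact hG.integrable_of_hasCompactSupport (.intro hK hzero.self_of_nhds)

end HasSpatiallyCompactSupport

variable [NormedSpace ℝ E] [NormedSpace ℝ F]

theorem hasDerivAt_time_slice {p : ℝ × E} (hG : DifferentiableAt ℝ G p) :
    HasDerivAt (fun s => G (s, p.2)) (fderiv ℝ G p (1, 0)) p.1 := by
  simpa [Function.comp_def] using
    (hG.hasFDerivAt.comp p.1 (hasFDerivAt_prodMk_left p.1 p.2)).hasDerivAt

theorem hasFDerivAt_space_slice {p : ℝ × E} (hG : DifferentiableAt ℝ G p) :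
    HasFDerivAt (fun y => G (p.1, y)) (fderiv ℝ G p ∘L .inr ℝ ℝ E) p.2 :=
  hG.hasFDerivAt.comp p.2 (hasFDerivAt_prodMk_right p.1 p.2)

theorem continuous_fderiv_apply_slice (hG : ContDiff ℝ 1 G) (t : ℝ) (v : ℝ × E) :
    Continuous fun x => fderiv ℝ G (t, x) v :=
  ((hG.continuous_fderiv one_ne_zero).comp (by fun_prop)).clm_apply continuous_const

namespace HasSpatiallyCompactSupport

theorem fderiv_apply (hS : HasSpatiallyCompactSupport G) (v : ℝ × E) :
    HasSpatiallyCompactSupport fun p => fderiv ℝ G p v := by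
  intro t
  obtain ⟨K, hK, hG⟩ := hS t
  refine ⟨K, hK, hG.eventually_nhds.mono fun s hs x hx => ?_⟩
  have hzero : G =ᶠ[𝓝 (s, x)] fun _ => 0 := by
    filter_upwards [prod_mem_nhds hs (hK.isClosed.isOpen_compl.mem_nhds hx)] with p hp
    exact hp.1 p.2 hp.2
  simp [hzero.fderiv_eq]

variable [MeasurableSpace E] {μ : Measure E}

theorem hasDerivAt_integral [OpensMeasurableSpace E] [IsFiniteMeasureOnCompacts μ]
    (hS : HasSpatiallyCompactSupport G) (hG : ContDiff ℝ 1 G) (t : ℝ) :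
    HasDerivAt (fun s => ∫ x, G (s, x) ∂μ) (∫ x, fderiv ℝ G (t, x) (1, 0) ∂μ) t := by
  have hslice (s : ℝ) : Continuous fun x => G (s, x) := hG.continuous.comp (by fun_prop)
  obtain ⟨K, hK, hzero⟩ := hS.fderiv_apply (1, 0) t
  obtain ⟨M, hM⟩ := ((isCompact_closedBall t 1).prod hK).exists_bound_of_continuousOn
    ((hG.continuous_fderiv one_ne_zero).clm_apply continuous_const).continuousOn
  refine (hasDerivAt_integral_of_dominated_loc_of_deriv_le (F := fun s x => G (s, x))
    (F' := fun s x => fderiv ℝ G (s, x) (1, 0)) (bound := K.indicator fun _ => M)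
    (inter_mem hzero (Metric.closedBall_mem_nhds t one_pos))
    (.of_forall fun s => ?_) (hS.integrable_slice (hslice t))
    ?_
    (.of_forall fun x s hs => ?_) ?_ (.of_forall fun x s _ => ?_)).2
  · exact ((hS.integrable_slice (hslice s)).aestronglyMeasurable)
  · exact ((hS.fderiv_apply _).integrable_slice
      (continuous_fderiv_apply_slice hG t _)).aestronglyMeasurable
  · by_cases hx : x ∈ K
    · simpa [hx] using hM (s, x) ⟨hs.2, hx⟩
    · simp [hx, hs.1 x hx]
  · exact (integrable_indicator_iff hK.measurableSet).2
      (integrableOn_const hK.measure_lt_top.ne)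
  · exact hasDerivAt_time_slice (hG.differentiable one_ne_zero (s, x))

theorem integral_fderiv_space_eq_zero [FiniteDimensional ℝ E] [BorelSpace E] [μ.IsAddHaarMeasure]
    (hS : HasSpatiallyCompactSupport G) (hG : ContDiff ℝ 1 G) (t : ℝ) (v : E) :
    ∫ x, fderiv ℝ G (t, x) (0, v) ∂μ = 0 := by
  have hderiv (x : E) := hasFDerivAt_space_slice (hG.differentiable one_ne_zero (t, x))
  have hslice (x : E) : fderiv ℝ (fun y => G (t, y)) x v = fderiv ℝ G (t, x) (0, v) := by
    simp [(hderiv x).fderiv]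
  have hint : Integrable (fun x => fderiv ℝ G (t, x) (0, v)) μ :=
    (hS.fderiv_apply _).integrable_slice (continuous_fderiv_apply_slice hG t _)
  simpa [hslice] using integral_smul_fderiv_eq_neg_fderiv_smul_of_integrable (μ := μ)
    (f := fun _ : E => (1 : ℝ)) (g := fun y => G (t, y)) (v := v) (by simp)
    (by simpa [hslice] using hint)
    (by simpa using hS.integrable_slice (hG.continuous.comp (by fun_prop)))
    (fun _ _ => by fun_prop) (fun x _ => (hderiv x).differentiableAt)

end HasSpatiallyCompactSupport

end SpatiallyCompactSupport

section MovingCutoffs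

theorem contDiff_sqrt_one_add_sq : ContDiff ℝ 1 fun y : ℝ => √(1 + y ^ 2) :=
  ContDiff.sqrt (by fun_prop) fun y => (by positivity : 0 < 1 + y ^ 2).ne'

theorem abs_deriv_sqrt_one_add_sq_le_one (y : ℝ) :
    |deriv (fun y : ℝ => √(1 + y ^ 2)) y| ≤ 1 := by
  have hderiv : HasDerivAt (fun y : ℝ => √(1 + y ^ 2)) (y / √(1 + y ^ 2)) y := by
    convert ((hasDerivAt_pow 2 y).const_add 1).sqrt (by positivity) using 1
    field_simp
    ring
  rw [hderiv.deriv, abs_div, abs_of_nonneg (Real.sqrt_nonneg _)]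
  exact div_le_one_of_le₀ (Real.abs_le_sqrt (by linarith)) (Real.sqrt_nonneg _)

theorem abs_le_sqrt_one_add_sq (y : ℝ) : |y| ≤ √(1 + y ^ 2) :=
  Real.abs_le_sqrt (by linarith)

variable {ι : Type*}

/-- A smooth weight that equals one where `|xⱼ| ≥ R + t + 1`. Its edge moves outwards at unit speed,
and `√(1 + xⱼ²)` stands in for `|xⱼ|`, which is not differentiable. -/
noncomputable def exteriorConeWeight (j : ι) (R : ℝ) (p : ℝ × (ι → ℝ)) : ℝ :=
  Real.smoothTransition (√(1 + p.2 j ^ 2) - R - p.1)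

theorem exteriorConeWeight_le_one (j : ι) (R : ℝ) (p : ℝ × (ι → ℝ)) :
    exteriorConeWeight j R p ≤ 1 :=
  Real.smoothTransition.le_one _

theorem exteriorConeWeight_eq_one {j : ι} {R : ℝ} {p : ℝ × (ι → ℝ)} (hp : R + p.1 + 1 ≤ |p.2 j|) :
    exteriorConeWeight j R p = 1 :=
  Real.smoothTransition.one_of_one_le (by linarith [abs_le_sqrt_one_add_sq (p.2 j)])

theorem eventually_exteriorConeWeight_eq_zero (j : ι) (p : ℝ × (ι → ℝ)) :
    ∀ᶠ R in atTop, exteriorConeWeight j R p = 0 := by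
  filter_upwards [eventually_ge_atTop (√(1 + p.2 j ^ 2) - p.1)] with R hR
  exact Real.smoothTransition.zero_of_nonpos (by linarith)

variable [Fintype ι]

/-- A smooth cutoff to the box `|xₖ| ≤ L - t`, whose faces move inwards at unit speed; as in
`exteriorConeWeight`, `√(1 + xₖ²)` stands in for `|xₖ|`. -/
noncomputable def shrinkingBoxCutoff (L : ℝ) (p : ℝ × (ι → ℝ)) : ℝ :=
  ∏ k, Real.smoothTransition (L - √(1 + p.2 k ^ 2) - p.1)

theorem hasSpatiallyCompactSupport_shrinkingBoxCutoff (L : ℝ) :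
    HasSpatiallyCompactSupport (shrinkingBoxCutoff L : ℝ × (ι → ℝ) → ℝ) := by
  refine fun t => ⟨Set.univ.pi fun _ => Set.Icc (t - 1 - L) (L - t + 1),
    isCompact_univ_pi fun _ => isCompact_Icc, ?_⟩
  filter_upwards [Ioi_mem_nhds (sub_one_lt t)] with s hs x hx
  obtain ⟨k, hk⟩ : ∃ k, ¬ |x k| ≤ L - t + 1 := by
    by_contra! hbox
    exact hx fun k _ => ⟨by linarith [neg_le_of_abs_le (hbox k)], le_of_abs_le (hbox k)⟩
  refine Finset.prod_eq_zero (Finset.mem_univ k) (Real.smoothTransition.zero_of_nonpos ?_)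
  linarith [abs_le_sqrt_one_add_sq (x k), Set.mem_Ioi.1 hs]

theorem shrinkingBoxCutoff_le_one (L : ℝ) (p : ℝ × (ι → ℝ)) : shrinkingBoxCutoff L p ≤ 1 :=
  Finset.prod_le_one (fun _ _ => Real.smoothTransition.nonneg _)
    fun _ _ => Real.smoothTransition.le_one _

theorem shrinkingBoxCutoff_mono (p : ℝ × (ι → ℝ)) : Monotone fun L => shrinkingBoxCutoff L p :=
  fun _ _ hL => Finset.prod_le_prod (fun _ _ => Real.smoothTransition.nonneg _)
    fun _ _ => Real.smoothTransition.monotone (by gcongr)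

theorem tendsto_shrinkingBoxCutoff (p : ℝ × (ι → ℝ)) :
    Tendsto (fun L => shrinkingBoxCutoff L p) atTop (𝓝 1) := by
  refine tendsto_const_nhds.congr' ?_
  have hlarge : ∀ᶠ L in atTop, ∀ k, 1 + p.1 + √(1 + p.2 k ^ 2) ≤ L :=
    eventually_all.2 fun k => eventually_ge_atTop _
  filter_upwards [hlarge] with L hL
  exact (Finset.prod_eq_one fun k _ =>
    Real.smoothTransition.one_of_one_le (by linarith [hL k])).symm

end MovingCutoffs

section CausalTransport

variable {ι : Type*} [Fintype ι] [DecidableEq ι]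

/-- A continuously differentiable density and flux on space-time that satisfy the continuity
equation `∂ₜρ + ∑ ∂ₖJₖ = 0` and transport `ρ` at speed at most one along every coordinate axis. -/
structure IsSubluminalCurrent (ρ : ℝ × (ι → ℝ) → ℝ) (J : ι → ℝ × (ι → ℝ) → ℝ) : Prop where
  contDiff_density : ContDiff ℝ 1 ρ
  contDiff_flux : ∀ k, ContDiff ℝ 1 (J k)
  density_nonneg : ∀ p, 0 ≤ ρ p
  abs_flux_le : ∀ k p, |J k p| ≤ ρ p
  continuity_eq : ∀ p, fderiv ℝ ρ p (1, 0) + ∑ k, fderiv ℝ (J k) p (0, Pi.single k 1) = 0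

/-- A nonnegative weight with `∂ₜW + ∑ |∂ₖW| ≤ 0`, that is, one that does not increase along any
curve whose coordinate speeds are at most one. -/
structure IsCausalWeight (W : ℝ × (ι → ℝ) → ℝ) : Prop where
  contDiff : ContDiff ℝ 1 W
  nonneg : ∀ p, 0 ≤ W p
  hamiltonJacobi_le : ∀ p, fderiv ℝ W p (1, 0) + ∑ k, |fderiv ℝ W p (0, Pi.single k 1)| ≤ 0

namespace IsCausalWeight

variable {W W₁ W₂ : ℝ × (ι → ℝ) → ℝ}

theorem one : IsCausalWeight (1 : ℝ × (ι → ℝ) → ℝ) :=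
  ⟨contDiff_const, fun _ => zero_le_one, by simp⟩

theorem mul (h₁ : IsCausalWeight W₁) (h₂ : IsCausalWeight W₂) :
    IsCausalWeight (W₁ * W₂) := by
  refine ⟨h₁.contDiff.mul h₂.contDiff, fun p => mul_nonneg (h₁.nonneg p) (h₂.nonneg p),
    fun p => ?_⟩
  have hprod (v : ℝ × (ι → ℝ)) :
      fderiv ℝ (W₁ * W₂) p v = W₁ p * fderiv ℝ W₂ p v + W₂ p * fderiv ℝ W₁ p v := by
    simp [fderiv_mul (h₁.contDiff.differentiable one_ne_zero p)
      (h₂.contDiff.differentiable one_ne_zero p)]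
  calc fderiv ℝ (W₁ * W₂) p (1, 0) + ∑ k, |fderiv ℝ (W₁ * W₂) p (0, Pi.single k 1)|
      ≤ W₁ p * fderiv ℝ W₂ p (1, 0) + W₂ p * fderiv ℝ W₁ p (1, 0)
        + ∑ k, (W₁ p * |fderiv ℝ W₂ p (0, Pi.single k 1)|
          + W₂ p * |fderiv ℝ W₁ p (0, Pi.single k 1)|) := by
        rw [hprod]
        gcongr with k
        rw [hprod]
        refine (abs_add_le _ _).trans_eq ?_
        rw [abs_mul, abs_mul, abs_of_nonneg (h₁.nonneg p), abs_of_nonneg (h₂.nonneg p)]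
    _ = W₁ p * (fderiv ℝ W₂ p (1, 0) + ∑ k, |fderiv ℝ W₂ p (0, Pi.single k 1)|)
        + W₂ p * (fderiv ℝ W₁ p (1, 0) + ∑ k, |fderiv ℝ W₁ p (0, Pi.single k 1)|) := by
        rw [Finset.sum_add_distrib, ← Finset.mul_sum, ← Finset.mul_sum]
        ring
    _ ≤ 0 := add_nonpos (mul_nonpos_of_nonneg_of_nonpos (h₁.nonneg p) (h₂.hamiltonJacobi_le p))
        (mul_nonpos_of_nonneg_of_nonpos (h₂.nonneg p) (h₁.hamiltonJacobi_le p))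

theorem prod {κ : Type*} {W : κ → ℝ × (ι → ℝ) → ℝ} (s : Finset κ)
    (hW : ∀ i ∈ s, IsCausalWeight (W i)) : IsCausalWeight (∏ i ∈ s, W i) :=
  Finset.prod_induction W IsCausalWeight (fun _ _ => mul) one hW

theorem of_abs_deriv_le_one {F h : ℝ → ℝ} (hF : ContDiff ℝ 1 F) (hF_mono : Monotone F)
    (hF_nonneg : ∀ y, 0 ≤ F y) (hh : ContDiff ℝ 1 h) (hh_deriv : ∀ y, |deriv h y| ≤ 1) (j : ι) :
    IsCausalWeight fun p => F (h (p.2 j) - p.1) := by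
  refine ⟨hF.comp (by fun_prop), fun _ => hF_nonneg _, fun p => ?_⟩
  let coord : ℝ × (ι → ℝ) →L[ℝ] ℝ := .proj j ∘L .snd ℝ ℝ (ι → ℝ)
  have hphase : HasFDerivAt (fun q : ℝ × (ι → ℝ) => h (q.2 j) - q.1) _ p :=
    ((hh.differentiable one_ne_zero _).hasDerivAt.comp_hasFDerivAt p coord.hasFDerivAt).sub
      hasFDerivAt_fst
  have hderiv : HasFDerivAt (fun q : ℝ × (ι → ℝ) => F (h (q.2 j) - q.1)) _ p :=
    (hF.differentiable one_ne_zero _).hasDerivAt.comp_hasFDerivAt p hphase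
  have hF' : 0 ≤ deriv F (h (p.2 j) - p.1) := hF_mono.deriv_nonneg
  rw [hderiv.fderiv]
  simpa [coord, Pi.single_apply, apply_ite abs, abs_mul, abs_of_nonneg hF']
    using mul_le_mul_of_nonneg_left (hh_deriv (p.2 j)) hF'

theorem weighted_continuity_le {ρ : ℝ × (ι → ℝ) → ℝ} {J : ι → ℝ × (ι → ℝ) → ℝ}
    (hW : IsCausalWeight W) (hρ : IsSubluminalCurrent ρ J) (p : ℝ × (ι → ℝ)) :
    fderiv ℝ (fun q => W q * ρ q) p (1, 0)
      + ∑ k, fderiv ℝ (fun q => W q * J k q) p (0, Pi.single k 1) ≤ 0 := by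
  have hprod {f : ℝ × (ι → ℝ) → ℝ} (hf : ContDiff ℝ 1 f) (v : ℝ × (ι → ℝ)) :
      fderiv ℝ (fun q => W q * f q) p v = W p * fderiv ℝ f p v + fderiv ℝ W p v * f p := by
    simp [fderiv_fun_mul (hW.contDiff.differentiable one_ne_zero p)
      (hf.differentiable one_ne_zero p), mul_comm]
  calc fderiv ℝ (fun q => W q * ρ q) p (1, 0)
        + ∑ k, fderiv ℝ (fun q => W q * J k q) p (0, Pi.single k 1)
      = W p * (fderiv ℝ ρ p (1, 0) + ∑ k, fderiv ℝ (J k) p (0, Pi.single k 1))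
        + (fderiv ℝ W p (1, 0) * ρ p + ∑ k, fderiv ℝ W p (0, Pi.single k 1) * J k p) := by
        simp only [hprod hρ.contDiff_density, hprod (hρ.contDiff_flux _),
          Finset.sum_add_distrib, ← Finset.mul_sum]
        ring
    _ ≤ fderiv ℝ W p (1, 0) * ρ p + ∑ k, |fderiv ℝ W p (0, Pi.single k 1)| * ρ p := by
        rw [hρ.continuity_eq, mul_zero, zero_add]
        refine add_le_add_right (Finset.sum_le_sum fun k _ => (le_abs_self _).trans ?_) _
        rw [abs_mul]
        gcongr
        exact hρ.abs_flux_le k p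
    _ = (fderiv ℝ W p (1, 0) + ∑ k, |fderiv ℝ W p (0, Pi.single k 1)|) * ρ p := by
        rw [add_mul, Finset.sum_mul]
    _ ≤ 0 := mul_nonpos_of_nonpos_of_nonneg (hW.hamiltonJacobi_le p) (hρ.density_nonneg p)

theorem antitone_integral_mul_density {ρ : ℝ × (ι → ℝ) → ℝ} {J : ι → ℝ × (ι → ℝ) → ℝ}
    (hW : IsCausalWeight W) (hS : HasSpatiallyCompactSupport W) (hρ : IsSubluminalCurrent ρ J) :
    Antitone fun t => ∫ x, W (t, x) * ρ (t, x) := by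
  have hWρ : ContDiff ℝ 1 fun p => W p * ρ p := hW.contDiff.mul hρ.contDiff_density
  have hWJ (k : ι) : ContDiff ℝ 1 fun p => W p * J k p := hW.contDiff.mul (hρ.contDiff_flux k)
  have hderiv (t : ℝ) := (hS.mul_right (g := ρ)).hasDerivAt_integral (μ := volume) hWρ t
  refine antitone_of_deriv_nonpos (fun t => (hderiv t).differentiableAt) fun t => ?_
  have hint_density : Integrable fun x => fderiv ℝ (fun p => W p * ρ p) (t, x) (1, 0) :=
    (hS.mul_right.fderiv_apply _).integrable_slice (continuous_fderiv_apply_slice hWρ t _)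
  have hint_flux (k : ι) :
      Integrable fun x => fderiv ℝ (fun p => W p * J k p) (t, x) (0, Pi.single k 1) :=
    (hS.mul_right.fderiv_apply _).integrable_slice (continuous_fderiv_apply_slice (hWJ k) t _)
  have hdivergence (k : ι) :
      ∫ x, fderiv ℝ (fun p => W p * J k p) (t, x) (0, Pi.single k 1) = 0 :=
    hS.mul_right.integral_fderiv_space_eq_zero (hWJ k) t _
  calc deriv (fun t => ∫ x, W (t, x) * ρ (t, x)) t
      = ∫ x, (fderiv ℝ (fun p => W p * ρ p) (t, x) (1, 0)
          + ∑ k, fderiv ℝ (fun p => W p * J k p) (t, x) (0, Pi.single k 1)) := by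
        rw [(hderiv t).deriv, integral_add hint_density (integrable_finsetSum _ fun k _ =>
          hint_flux k), integral_finsetSum _ fun k _ => hint_flux k]
        simp [hdivergence]
    _ ≤ 0 := integral_nonpos fun x => hW.weighted_continuity_le hρ (t, x)

end IsCausalWeight

theorem isCausalWeight_exteriorConeWeight (j : ι) (R : ℝ) :
    IsCausalWeight (exteriorConeWeight j R) :=
  .of_abs_deriv_le_one Real.smoothTransition.contDiff Real.smoothTransition.monotone
    Real.smoothTransition.nonneg (contDiff_sqrt_one_add_sq.sub contDiff_const)
    (fun y => by simpa using abs_deriv_sqrt_one_add_sq_le_one y) j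

theorem isCausalWeight_shrinkingBoxCutoff (L : ℝ) :
    IsCausalWeight (shrinkingBoxCutoff L : ℝ × (ι → ℝ) → ℝ) := by
  have hprod : (shrinkingBoxCutoff L : ℝ × (ι → ℝ) → ℝ)
      = ∏ k, fun p => Real.smoothTransition (L - √(1 + p.2 k ^ 2) - p.1) := by
    ext p
    simp [shrinkingBoxCutoff]
  rw [hprod]
  exact .prod _ fun k _ => .of_abs_deriv_le_one Real.smoothTransition.contDiff
    Real.smoothTransition.monotone Real.smoothTransition.nonneg
    (contDiff_const.sub contDiff_sqrt_one_add_sq)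
    (fun y => by simpa using abs_deriv_sqrt_one_add_sq_le_one y) k

theorem IsCausalWeight.antitone_lintegral_mul_density_of_hasSpatiallyCompactSupport
    {W ρ : ℝ × (ι → ℝ) → ℝ} {J : ι → ℝ × (ι → ℝ) → ℝ} (hW : IsCausalWeight W)
    (hS : HasSpatiallyCompactSupport W) (hρ : IsSubluminalCurrent ρ J) :
    Antitone fun t => ∫⁻ x, ENNReal.ofReal (W (t, x) * ρ (t, x)) := by
  have hint (t : ℝ) : Integrable fun x => W (t, x) * ρ (t, x) :=
    hS.mul_right.integrable_slice
      ((hW.contDiff.continuous.mul hρ.contDiff_density.continuous).comp (by fun_prop))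
  have hlintegral (t : ℝ) : ∫⁻ x, ENNReal.ofReal (W (t, x) * ρ (t, x))
      = ENNReal.ofReal (∫ x, W (t, x) * ρ (t, x)) :=
    (ofReal_integral_eq_lintegral_ofReal (hint t)
      (.of_forall fun x => mul_nonneg (hW.nonneg _) (hρ.density_nonneg _))).symm
  simp only [hlintegral]
  exact fun s t hst => ENNReal.ofReal_le_ofReal (hW.antitone_integral_mul_density hS hρ hst)

theorem IsCausalWeight.antitone_lintegral_mul_density {W ρ : ℝ × (ι → ℝ) → ℝ}
    {J : ι → ℝ × (ι → ℝ) → ℝ} (hW : IsCausalWeight W) (hρ : IsSubluminalCurrent ρ J) :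
    Antitone fun t => ∫⁻ x, ENNReal.ofReal (W (t, x) * ρ (t, x)) := by
  intro s t hst
  let W' (L : ℕ) : ℝ × (ι → ℝ) → ℝ := shrinkingBoxCutoff L * W
  have hW' (L : ℕ) : IsCausalWeight (W' L) := (isCausalWeight_shrinkingBoxCutoff L).mul hW
  have hcont (L : ℕ) : Continuous fun x => W' L (t, x) * ρ (t, x) :=
    ((hW' L).contDiff.continuous.mul hρ.contDiff_density.continuous).comp (by fun_prop)
  have hle (L : ℕ) : ∫⁻ x, ENNReal.ofReal (W' L (t, x) * ρ (t, x))
      ≤ ∫⁻ x, ENNReal.ofReal (W (s, x) * ρ (s, x)) :=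
    calc ∫⁻ x, ENNReal.ofReal (W' L (t, x) * ρ (t, x))
        ≤ ∫⁻ x, ENNReal.ofReal (W' L (s, x) * ρ (s, x)) :=
          (hW' L).antitone_lintegral_mul_density_of_hasSpatiallyCompactSupport
            (hasSpatiallyCompactSupport_shrinkingBoxCutoff L).mul_right hρ hst
      _ ≤ ∫⁻ x, ENNReal.ofReal (W (s, x) * ρ (s, x)) := by
          gcongr with x
          · exact hρ.density_nonneg _
          · exact mul_le_of_le_one_left (hW.nonneg _) (shrinkingBoxCutoff_le_one _ _)
  refine le_of_tendsto' (lintegral_tendsto_of_tendsto_of_monotone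
    (fun L => (hcont L).measurable.ennreal_ofReal.aemeasurable)
    (.of_forall fun x L L' hL => ?_) (.of_forall fun x => ?_)) hle
  · dsimp only [W', Pi.mul_apply]
    gcongr
    · exact hρ.density_nonneg _
    · exact hW.nonneg _
    · exact shrinkingBoxCutoff_mono _ (by exact_mod_cast hL)
  · refine (ENNReal.continuous_ofReal.tendsto _).comp ?_
    simpa [W', Function.comp_def] using
      (((tendsto_shrinkingBoxCutoff (t, x)).comp tendsto_natCast_atTop_atTop).mul_const
        (W (t, x))).mul_const (ρ (t, x))

namespace IsSubluminalCurrent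

variable {ρ : ℝ × (ι → ℝ) → ℝ} {J : ι → ℝ × (ι → ℝ) → ℝ}

theorem continuous_density_slice (hρ : IsSubluminalCurrent ρ J) (t : ℝ) :
    Continuous fun x => ρ (t, x) :=
  hρ.contDiff_density.continuous.comp (by fun_prop)

theorem tendsto_lintegral_exteriorConeWeight (hρ : IsSubluminalCurrent ρ J) {t : ℝ}
    (hint : Integrable fun x => ρ (t, x)) (j : ι) :
    Tendsto (fun R => ∫⁻ x, ENNReal.ofReal (exteriorConeWeight j R (t, x) * ρ (t, x)))
      atTop (𝓝 0) := by
  have hcont (R : ℝ) : Continuous fun x => exteriorConeWeight j R (t, x) :=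
    (isCausalWeight_exteriorConeWeight j R).contDiff.continuous.comp (by fun_prop)
  rw [← lintegral_zero (μ := volume (α := ι → ℝ))]
  refine tendsto_lintegral_filter_of_dominated_convergence (fun x => ENNReal.ofReal (ρ (t, x)))
    (.of_forall fun R =>
      ((hcont R).mul (hρ.continuous_density_slice t)).measurable.ennreal_ofReal)
    (.of_forall fun R => .of_forall fun x => ?_) hint.lintegral_lt_top.ne
    (.of_forall fun x => ?_)
  · gcongr
    exact mul_le_of_le_one_left (hρ.density_nonneg _) (exteriorConeWeight_le_one _ _ _)
  · refine tendsto_const_nhds.congr' ?_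
    filter_upwards [eventually_exteriorConeWeight_eq_zero j (t, x)] with R hR
    simp [hR]

theorem lintegral_exterior_cone_le (hρ : IsSubluminalCurrent ρ J) (j : ι) (R : ℝ) {t : ℝ}
    (ht : 0 ≤ t) :
    ∫⁻ x in {x | R + t + 1 ≤ |x j|}, ENNReal.ofReal (ρ (t, x))
      ≤ ∫⁻ x, ENNReal.ofReal (exteriorConeWeight j R (0, x) * ρ (0, x)) := by
  have hmeas : MeasurableSet {x : ι → ℝ | R + t + 1 ≤ |x j|} :=
    measurableSet_le measurable_const (by fun_prop)
  calc ∫⁻ x in {x | R + t + 1 ≤ |x j|}, ENNReal.ofReal (ρ (t, x))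
      = ∫⁻ x in {x | R + t + 1 ≤ |x j|},
          ENNReal.ofReal (exteriorConeWeight j R (t, x) * ρ (t, x)) :=
        setLIntegral_congr_fun hmeas fun x hx => by
          simp [exteriorConeWeight_eq_one (p := (t, x)) hx]
    _ ≤ ∫⁻ x, ENNReal.ofReal (exteriorConeWeight j R (t, x) * ρ (t, x)) :=
        setLIntegral_le_lintegral _ _
    _ ≤ ∫⁻ x, ENNReal.ofReal (exteriorConeWeight j R (0, x) * ρ (0, x)) :=
        (isCausalWeight_exteriorConeWeight j R).antitone_lintegral_mul_density hρ ht

theorem tendsto_setIntegral_exterior_cone (hρ : IsSubluminalCurrent ρ J)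
    (hint : Integrable fun x => ρ (0, x)) (j : ι) {b : ℝ} (hb : 0 < b) :
    Tendsto (fun t : ℝ => ∫ x in {x : ι → ℝ | (1 + b) * t ≤ |x j|}, ρ (t, x)) atTop (𝓝 0) := by
  have hradius : Tendsto (fun t => b * t - 1) atTop atTop :=
    tendsto_atTop_add_const_right _ _ (tendsto_id.const_mul_atTop hb)
  have hlintegral : Tendsto
      (fun t : ℝ => ∫⁻ x in {x : ι → ℝ | (1 + b) * t ≤ |x j|}, ENNReal.ofReal (ρ (t, x)))
      atTop (𝓝 0) := by
    refine tendsto_of_tendsto_of_tendsto_of_le_of_le' tendsto_const_nhds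
      ((hρ.tendsto_lintegral_exteriorConeWeight hint j).comp hradius) (.of_forall fun _ => zero_le)
      ?_
    filter_upwards [eventually_ge_atTop 0] with t ht
    have hthreshold : (1 + b) * t = b * t - 1 + t + 1 := by ring
    simpa only [hthreshold, Function.comp_apply]
      using hρ.lintegral_exterior_cone_le j (b * t - 1) ht
  refine ((ENNReal.tendsto_toReal ENNReal.zero_ne_top).comp hlintegral).congr fun t => ?_
  exact (integral_eq_lintegral_of_nonneg_ae (.of_forall fun x => hρ.density_nonneg (t, x))
    (hρ.continuous_density_slice t).aestronglyMeasurable).symm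

end IsSubluminalCurrent

end CausalTransport

theorem norm_le_one_of_isSelfAdjoint_of_mul_self_eq_one {A : Type*} [NormedRing A] [StarRing A]
    [CStarRing A] {a : A} (ha : IsSelfAdjoint a) (hsq : a * a = 1) : ‖a‖ ≤ 1 := by
  nontriviality A
  exact (CStarRing.norm_of_mem_unitary (Unitary.mem_iff.2 (by simp [ha.star_eq, hsq]))).le

section DiracBilinear

variable {κ : Type*} [Fintype κ]

/-- The real bilinear covariant `Re (u† M u)` of a spinor `u`: the charge density for `M = 1` and
the `k`-th component of the charge flux for `M = αₖ`. -/
def diracBilinear (M : Matrix κ κ ℂ) (u : κ → ℂ) : ℝ :=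
  (star u ⬝ᵥ M *ᵥ u).re

theorem diracBilinear_one [DecidableEq κ] (u : κ → ℂ) : diracBilinear 1 u = ∑ k, ‖u k‖ ^ 2 := by
  simp [diracBilinear, dotProduct, Complex.conj_mul', ← Complex.ofReal_pow]

theorem contDiff_diracBilinear (M : Matrix κ κ ℂ) {r : WithTop ℕ∞} :
    ContDiff ℝ r (diracBilinear M) := by
  have hstar : ContDiff ℝ r fun u : κ → ℂ => star u :=
    contDiff_pi.2 fun k => Complex.conjCLE.contDiff.comp (contDiff_apply ℝ ℂ k)
  have hmul : ContDiff ℝ r fun u : κ → ℂ => M *ᵥ u := by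
    unfold mulVec dotProduct
    fun_prop
  unfold diracBilinear dotProduct
  exact Complex.reCLM.contDiff.comp (.sum fun k _ =>
    (contDiff_pi.1 hstar k).mul (contDiff_pi.1 hmul k))

theorem hasDerivAt_diracBilinear {M : Matrix κ κ ℂ} (hM : M.IsHermitian) {φ : ℝ → κ → ℂ}
    {φ' : κ → ℂ} {t : ℝ} (hφ : HasDerivAt φ φ' t) :
    HasDerivAt (fun s => diracBilinear M (φ s)) (2 * (star (φ t) ⬝ᵥ M *ᵥ φ').re) t := by
  have hcomponent := hasDerivAt_pi.1 hφ
  have hmul (a : κ) : HasDerivAt (fun s => (M *ᵥ φ s) a) ((M *ᵥ φ') a) t :=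
    HasDerivAt.fun_sum fun b _ => (hcomponent b).const_mul _
  have hdot : HasDerivAt (fun s => star (φ s) ⬝ᵥ M *ᵥ φ s)
      (star φ' ⬝ᵥ M *ᵥ φ t + star (φ t) ⬝ᵥ M *ᵥ φ') t := by
    simp only [dotProduct, ← Finset.sum_add_distrib]
    exact HasDerivAt.fun_sum fun a _ => (hcomponent a).star.fun_mul (hmul a)
  have hswap : star φ' ⬝ᵥ M *ᵥ φ t = star (star (φ t) ⬝ᵥ M *ᵥ φ') := by
    rw [← star_dotProduct, star_mulVec, hM.eq, ← dotProduct_mulVec]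
  refine (Complex.reCLM.hasFDerivAt.comp_hasDerivAt t hdot).congr_deriv ?_
  simp [hswap, two_mul]

theorem fderiv_diracBilinear_comp {E : Type*} [NormedAddCommGroup E] [NormedSpace ℝ E]
    {M : Matrix κ κ ℂ} (hM : M.IsHermitian) {Φ : E → κ → ℂ} {p : E}
    (hΦ : DifferentiableAt ℝ Φ p) (v : E) :
    fderiv ℝ (fun q => diracBilinear M (Φ q)) p v
      = 2 * (star (Φ p) ⬝ᵥ M *ᵥ fderiv ℝ Φ p v).re := by
  have hdiff : DifferentiableAt ℝ (fun q => diracBilinear M (Φ q)) p :=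
    ((contDiff_diracBilinear M).differentiable one_ne_zero _).comp p hΦ
  have hline : HasLineDerivAt ℝ (fun q => diracBilinear M (Φ q))
      (2 * (star (Φ p) ⬝ᵥ M *ᵥ fderiv ℝ Φ p v).re) p v := by
    simpa [HasLineDerivAt] using
      hasDerivAt_diracBilinear hM (hΦ.hasFDerivAt.hasLineDerivAt v)
  rw [← hdiff.lineDeriv_eq_fderiv, hline.lineDeriv]

open scoped Matrix.Norms.L2Operator in
theorem abs_diracBilinear_le [DecidableEq κ] {M : Matrix κ κ ℂ} (hM : ‖M‖ ≤ 1) (u : κ → ℂ) :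
    |diracBilinear M u| ≤ ∑ k, ‖u k‖ ^ 2 := by
  let v : EuclideanSpace ℂ κ := WithLp.toLp 2 u
  let w : EuclideanSpace ℂ κ := WithLp.toLp 2 (M *ᵥ u)
  have hinner : inner ℂ v w = star u ⬝ᵥ M *ᵥ u := by
    simp [v, w, EuclideanSpace.inner_toLp_toLp, dotProduct_comm]
  calc |diracBilinear M u| ≤ ‖inner ℂ v w‖ := by
        rw [hinner]
        exact Complex.abs_re_le_norm _
    _ ≤ ‖v‖ * ‖w‖ := norm_inner_le_norm v w
    _ ≤ ‖v‖ * (1 * ‖v‖) := by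
        gcongr
        exact (l2_opNorm_mulVec M v).trans (by gcongr)
    _ = ∑ k, ‖u k‖ ^ 2 := by
        rw [one_mul, ← sq, EuclideanSpace.norm_sq_eq]

end DiracBilinear

section DiracEquation

section Components

variable {E κ : Type*} [NormedAddCommGroup E] [NormedSpace ℝ E] [Finite κ] {ψ : ℝ → E → κ → ℂ}
  {p : ℝ × E}

theorem deriv_component_eq_fderiv (hψ : DifferentiableAt ℝ (fun q : ℝ × E => ψ q.1 q.2) p)
    (k : κ) :
    deriv (fun s => ψ s p.2 k) p.1 = fderiv ℝ (fun q : ℝ × E => ψ q.1 q.2) p (1, 0) k := by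
  have := Fintype.ofFinite κ
  exact (hasDerivAt_pi.1 (hasDerivAt_time_slice hψ) k).deriv

theorem fderiv_component_eq_fderiv (hψ : DifferentiableAt ℝ (fun q : ℝ × E => ψ q.1 q.2) p)
    (k : κ) (v : E) :
    fderiv ℝ (fun y => ψ p.1 y k) p.2 v
      = fderiv ℝ (fun q : ℝ × E => ψ q.1 q.2) p (0, v) k := by
  have := Fintype.ofFinite κ
  have hcomponent : HasFDerivAt (fun y => ψ p.1 y k) _ p.2 :=
    hasFDerivAt_pi'.1 (hasFDerivAt_space_slice hψ) k
  simp [hcomponent.fderiv]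

end Components

variable {ι κ : Type*} [Fintype ι] [DecidableEq ι] [Fintype κ]

/-- The Dirac equation `i ∂ₜψ = -i ∑ⱼ αⱼ ∂ⱼψ + H ψ`, component by component. A matrix field `H` that
depends on space-time covers the mass term as well as nonlinear potentials evaluated along `ψ`. -/
def SatisfiesDiracEquation (α : ι → Matrix κ κ ℂ) (H : ℝ → (ι → ℝ) → Matrix κ κ ℂ)
    (ψ : ℝ → (ι → ℝ) → κ → ℂ) : Prop :=
  ∀ t x k, Complex.I * deriv (fun s => ψ s x k) t
    = -Complex.I * (∑ j, (α j *ᵥ fun l => fderiv ℝ (fun y => ψ t y l) x (Pi.single j 1)) k)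
      + (H t x *ᵥ ψ t x) k

namespace SatisfiesDiracEquation

variable {α : ι → Matrix κ κ ℂ} {H : ℝ → (ι → ℝ) → Matrix κ κ ℂ} {ψ : ℝ → (ι → ℝ) → κ → ℂ}

theorem fderiv_time_eq (hψ : SatisfiesDiracEquation α H ψ)
    (hdiff : Differentiable ℝ fun p : ℝ × (ι → ℝ) => ψ p.1 p.2) (p : ℝ × (ι → ℝ)) :
    fderiv ℝ (fun p : ℝ × (ι → ℝ) => ψ p.1 p.2) p (1, 0)
      = -∑ j, α j *ᵥ fderiv ℝ (fun p : ℝ × (ι → ℝ) => ψ p.1 p.2) p (0, Pi.single j 1)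
        - Complex.I • (H p.1 p.2 *ᵥ ψ p.1 p.2) := by
  ext k
  have heq := hψ p.1 p.2 k
  simp only [deriv_component_eq_fderiv (hdiff p), fderiv_component_eq_fderiv (hdiff p)] at heq
  apply mul_left_cancel₀ Complex.I_ne_zero
  simp only [Pi.sub_apply, Pi.neg_apply, Finset.sum_apply, Pi.smul_apply, smul_eq_mul, mul_sub,
    ← mul_assoc, Complex.I_mul_I]
  linear_combination heq

theorem continuity_eq [DecidableEq κ] (hψ : SatisfiesDiracEquation α H ψ)
    (hdiff : Differentiable ℝ fun p : ℝ × (ι → ℝ) => ψ p.1 p.2)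
    (hα : ∀ j, (α j).IsHermitian) (hH : ∀ t x, (H t x).IsHermitian) (p : ℝ × (ι → ℝ)) :
    fderiv ℝ (fun q => diracBilinear 1 (ψ q.1 q.2)) p (1, 0)
      + ∑ j, fderiv ℝ (fun q => diracBilinear (α j) (ψ q.1 q.2)) p (0, Pi.single j 1) = 0 := by
  have hzeroth : (star (ψ p.1 p.2) ⬝ᵥ H p.1 p.2 *ᵥ ψ p.1 p.2).im = 0 :=
    (hH p.1 p.2).im_star_dotProduct_mulVec_self _
  rw [fderiv_diracBilinear_comp isHermitian_one (hdiff p), one_mulVec, hψ.fderiv_time_eq hdiff]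
  simp only [fderiv_diracBilinear_comp (hα _) (hdiff p), dotProduct_sub, dotProduct_neg,
    dotProduct_sum, dotProduct_smul, ← Finset.mul_sum]
  simp [hzeroth]

open scoped Matrix.Norms.L2Operator in
theorem isSubluminalCurrent [DecidableEq κ] (hψ : SatisfiesDiracEquation α H ψ)
    (hdiff : ContDiff ℝ 1 fun p : ℝ × (ι → ℝ) => ψ p.1 p.2)
    (hα : ∀ j, (α j).IsHermitian) (hα_norm : ∀ j, ‖α j‖ ≤ 1) (hH : ∀ t x, (H t x).IsHermitian) :
    IsSubluminalCurrent (fun p => ∑ k, ‖ψ p.1 p.2 k‖ ^ 2)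
      (fun j p => diracBilinear (α j) (ψ p.1 p.2)) := by
  simp only [← diracBilinear_one]
  exact ⟨(contDiff_diracBilinear 1).comp hdiff, fun j => (contDiff_diracBilinear (α j)).comp hdiff,
    fun p => by rw [diracBilinear_one]; positivity,
    fun j p => by rw [diracBilinear_one]; exact abs_diracBilinear_le (hα_norm j) _,
    hψ.continuity_eq (hdiff.differentiable one_ne_zero) hα hH⟩

end SatisfiesDiracEquation

open scoped Matrix.Norms.L2Operator in
theorem dirac_exterior_cone_decay_general [DecidableEq κ] {α : ι → Matrix κ κ ℂ}
    {H : ℝ → (ι → ℝ) → Matrix κ κ ℂ} {ψ : ℝ → (ι → ℝ) → κ → ℂ}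
    (hα : ∀ j, (α j).IsHermitian) (hα_norm : ∀ j, ‖α j‖ ≤ 1) (hH : ∀ t x, (H t x).IsHermitian)
    (hψ : ContDiff ℝ 1 fun p : ℝ × (ι → ℝ) => ψ p.1 p.2)
    (hint : Integrable fun x => ∑ k, ‖ψ 0 x k‖ ^ 2) (hdirac : SatisfiesDiracEquation α H ψ)
    (j : ι) {b : ℝ} (hb : 0 < b) :
    Tendsto (fun t : ℝ => ∫ x in {x : ι → ℝ | (1 + b) * t ≤ |x j|}, ∑ k, ‖ψ t x k‖ ^ 2)
      atTop (𝓝 0) :=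
  (hdirac.isSubluminalCurrent hψ hα hα_norm hH).tendsto_setIntegral_exterior_cone hint j hb

end DiracEquation

theorem mul_self_eq_one_of_anticommute {A ι : Type*} [DecidableEq ι] [Ring A] [Algebra ℂ A]
    {α : ι → A} (hα : ∀ j k, α j * α k + α k * α j = if j = k then (2 : ℂ) • 1 else 0) (j : ι) :
    α j * α j = 1 := by
  have hdiag : (2 : ℂ) • (α j * α j) = (2 : ℂ) • 1 := by
    simpa [two_smul] using hα j j
  exact smul_right_injective A two_ne_zero hdiag

open scoped Matrix.Norms.L2Operator in
theorem norm_le_one_of_isHermitian_of_anticommute {ι κ : Type*} [DecidableEq ι] [Fintype κ]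
    [DecidableEq κ] {α : ι → Matrix κ κ ℂ} (hα_herm : ∀ j, (α j).IsHermitian)
    (hα : ∀ j k, α j * α k + α k * α j = if j = k then (2 : ℂ) • 1 else 0) (j : ι) :
    ‖α j‖ ≤ 1 :=
  norm_le_one_of_isSelfAdjoint_of_mul_self_eq_one (hα_herm j).isSelfAdjoint
    (mul_self_eq_one_of_anticommute hα j)

theorem integrable_sum_norm_sq_schwartz {E κ : Type*} [NormedAddCommGroup E] [NormedSpace ℝ E]
    [MeasurableSpace E] [BorelSpace E] [SecondCountableTopology E] {μ : Measure E}
    [μ.HasTemperateGrowth] [Fintype κ] (f : SchwartzMap E (κ → ℂ)) :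
    Integrable (fun x => ∑ k, ‖f x k‖ ^ 2) μ := by
  refine integrable_finsetSum _ fun k _ =>
    ((f.memLp 2 μ).integrable_norm_pow two_ne_zero).mono' ?_ (.of_forall fun x => ?_)
  · exact (((continuous_apply k).comp f.continuous).norm.pow 2).aestronglyMeasurable
  · rw [norm_pow, norm_norm]
    gcongr
    exact norm_le_pi_norm (f x) k

/-- Theorem 1.7: exterior light-cone decay for the `n`-dimensional Dirac equation with a
real potential `V`. -/
theorem dirac_exterior_cone_decay
    (n N : ℕ) (hn : 1 ≤ n) (hN : 1 ≤ N) (m : ℝ)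
    (α : Fin n → Matrix (Fin N) (Fin N) ℂ) (β : Matrix (Fin N) (Fin N) ℂ)
    (hαherm : ∀ j, (α j).IsHermitian) (hβherm : β.IsHermitian)
    (hanticomm : ∀ j k : Fin n,
      α j * α k + α k * α j = if j = k then (2 : ℂ) • (1 : Matrix (Fin N) (Fin N) ℂ) else 0)
    (hαβ : ∀ j, α j * β + β * α j = 0)
    (hβ2 : β * β = 1)
    (V : (Fin n → ℝ) → (Fin N → ℂ) → ℝ)
    (ψ : ℝ → (Fin n → ℝ) → (Fin N → ℂ))
    -- global classical solution: smoothness, Schwartz decay, uniform L² bound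
    (hψ : ContDiff ℝ (⊤ : ℕ∞) (fun p : ℝ × (Fin n → ℝ) => ψ p.1 p.2))
    (hψS : ∀ t : ℝ, ∃ f : SchwartzMap (Fin n → ℝ) (Fin N → ℂ), ∀ x, f x = ψ t x)
    (hbound : ∃ C : ℝ, ∀ t : ℝ,
      (∫ (x : Fin n → ℝ), ∑ k : Fin N, ‖ψ t x k‖ ^ 2) ≤ C)
    -- the equation i∂_tψ = −i Σ_j αʲ∂_jψ + (m + V(x,ψ))βψ, componentwise
    (heq : ∀ (t : ℝ) (x : Fin n → ℝ) (k : Fin N),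
      Complex.I * deriv (fun s => ψ s x k) t
        = -Complex.I *
            (∑ j : Fin n,
              ((α j) *ᵥ (fun l => fderiv ℝ (fun y => ψ t y l) x (Pi.single j 1))) k)
          + ((m + V x (ψ t x) : ℝ) : ℂ) * ((β *ᵥ ψ t x) k)) :
    ∀ (j : Fin n) (b : ℝ), 0 < b →
      Tendsto
        (fun t : ℝ =>
          ∫ x in {x : Fin n → ℝ | (1 + b) * t ≤ |x j|},
            ∑ k : Fin N, ‖ψ t x k‖ ^ 2)
        atTop (nhds 0) := by
  intro j b hb
  obtain ⟨f, hf⟩ := hψS 0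
  refine dirac_exterior_cone_decay_general (H := fun t x => ((m + V x (ψ t x) : ℝ) : ℂ) • β) hαherm
    (norm_le_one_of_isHermitian_of_anticommute hαherm hanticomm)
    (fun t x => hβherm.smul (Complex.conj_ofReal _))
    (hψ.of_le (mod_cast le_top)) ?_ (fun t x k => ?_) j hb
  · simpa only [hf] using integrable_sum_norm_sq_schwartz f
  · rw [heq, smul_mulVec, Pi.smul_apply, smul_eq_mul]
end

section
/- Let m ∈ ℝ and let (u, v) be a global classical solution of the 1D Dirac system in laboratory coordinates, and assume the nonlinearity W is such that u·conj(∂_{ū}W(u,v)) − v·conj(∂_{v̄}W(u,v)) is real for all (u,v) ∈ ℂ². Let ϕ : ℝ → ℝ be smooth with ϕ, ϕ′ bounded, let λ : ℝ → (0,∞) be C¹, and set J(t) = ∫_ℝ ϕ(x/λ(t)) (|u(t,x)|² − |v(t,x)|²) dx. Then for all t: d/dt J(t) = −(λ′(t)/λ(t)) ∫_ℝ (x/λ(t)) ϕ′(x/λ(t)) (|u|² − |v|²) dx + (1/λ(t)) ∫_ℝ ϕ′(x/λ(t)) (|u|² + |v|²) dx + 4m Im ∫_ℝ ϕ(x/λ(t))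 u(t,x) conj(v(t,x)) dx. -/
open MeasureTheory Filter

/-- Evaluation of a polynomial in the four variables `(u, ū, v, v̄)`. -/
noncomputable def evalW (W : MvPolynomial (Fin 4) ℂ) (z w : ℂ) : ℂ :=
  MvPolynomial.eval ![z, (starRingEnd ℂ) z, w, (starRingEnd ℂ) w] W

/-!
Letting `z → 0` along real lines, reality of `z conj N₁ - w conj N₂` forces `N₁` and `N₂` to vanish
at the origin, so the sources of the Dirac system are `O(|u| + |v|)`. Since `(u, v)` propagates at
unit speed, a bootstrap on backward cones upgrades the spatial decay at one time to decay uniform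
over nearby times; no decay of the derivatives is needed. After translating the variable of
integration along the characteristics, the densities `ϕ(x/λ) |u|²` and `ϕ(x/λ) |v|²` may therefore
be differentiated under the integral sign. In the difference of the two identities the reality
condition cancels the nonlinearity, while the mass terms add up to `4 m Im (u conj v)`.
-/

section

open Asymptotics Topology

section UniformDecay

variable {α β E F : Type*} [NormedAddCommGroup E] [NormedAddCommGroup F]

lemma isBigO_prod_top_iff {l : Filter α} {f : α × β → E} {g : α × β → F} :
    f =O[l ×ˢ ⊤] g ↔ ∃ C, ∀ᶠ a in l, ∀ b, ‖f (a, b)‖ ≤ C * ‖g (a, b)‖ := by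
  simp only [isBigO_iff, prod_top, eventually_comap, Prod.forall]
  exact exists_congr fun C => eventually_congr <| .of_forall fun a =>
    ⟨fun h b => h a b rfl, fun h a' b e => e ▸ h b⟩

lemma isBigO_top_of_prod_top [TopologicalSpace α] {a : α} {f : α × β → E} {g : α × β → F}
    (h : f =O[𝓝 a ×ˢ ⊤] g) : (fun b => f (a, b)) =O[⊤] fun b => g (a, b) :=
  h.comp_tendsto (k := Prod.mk a) (tendsto_const_nhds.prodMk tendsto_top)

lemma isBigO_comp_of_locallyLipschitz [ProperSpace E] {G : E → F} (hG : LocallyLipschitz G)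
    (hG0 : G 0 = 0) {l : Filter α} {f : α → E} (hf : f =O[l] fun _ => (1 : ℝ)) :
    (fun a => G (f a)) =O[l] f := by
  obtain ⟨r, hr⟩ := hf.bound
  obtain ⟨K, hK⟩ := hG.locallyLipschitzOn.exists_lipschitzOnWith_of_compact
    (isCompact_closedBall (0 : E) (max r 0))
  refine IsBigO.of_bound K (hr.mono fun a ha => ?_)
  simpa [hG0] using hK.norm_sub_le (x := f a) (y := 0)
    (by simpa using Or.inl (by simpa using ha)) (by simp)

/-- Peetre's inequality for the weight `1 + x ^ 2`. -/
lemma inv_one_add_sq_add_le (x h : ℝ) :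
    (1 + (x + h) ^ 2)⁻¹ ≤ 2 * (1 + h ^ 2) * (1 + x ^ 2)⁻¹ := by
  rw [← div_eq_mul_inv, inv_eq_one_div, div_le_div_iff₀ (by positivity) (by positivity)]
  nlinarith [sq_nonneg (x + 2 * h), mul_nonneg (sq_nonneg h) (sq_nonneg (x + h))]

end UniformDecay

section Transport

variable {E : Type*} [NormedAddCommGroup E] [NormedSpace ℝ E] {c : ℝ}

lemma hasDerivAt_characteristic (c t x s : ℝ) : HasDerivAt (fun s => x + c * (s - t)) c s := by
  simpa using (((hasDerivAt_id s).sub_const t).const_mul c).const_add x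

/-- `U` solves the transport equation `∂ₜU + c ∂ₓU = g`. Only the derivative along the
characteristics `x + c t = const` is required to exist. -/
def IsTransportSolution (c : ℝ) (g U : ℝ → ℝ → E) : Prop :=
  ∀ t x : ℝ, HasDerivAt (fun s => U s (x + c * (s - t))) (g t x) t

namespace IsTransportSolution

variable {g U : ℝ → ℝ → E}

lemma hasDerivAt_along (h : IsTransportSolution c g U) (t x s : ℝ) :
    HasDerivAt (fun s => U s (x + c * (s - t))) (g s (x + c * (s - t))) s := by
  have along (r : ℝ) : x + c * (s - t) + c * (r - s) = x + c * (r - t) := by ring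
  simpa only [along] using h s (x + c * (s - t))

lemma comp_neg_neg (h : IsTransportSolution c g U) :
    IsTransportSolution c (fun t x => -g (-t) (-x)) (fun t x => U (-t) (-x)) := by
  intro t x
  have reflected := (h (-t) (-x)).scomp t (hasDerivAt_neg t)
  have along (s : ℝ) : -(x + c * (s - t)) = -x + c * (-s - -t) := by ring
  simpa only [Function.comp_def, neg_smul, one_smul, along] using reflected

lemma mul {A : Type*} [NormedRing A] [NormedAlgebra ℝ A] {f g P Q : ℝ → ℝ → A}
    (hP : IsTransportSolution c f P) (hQ : IsTransportSolution c g Q) :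
    IsTransportSolution c (fun t x => f t x * Q t x + P t x * g t x)
      (fun t x => P t x * Q t x) := fun t x => by
  simpa using (hP t x).fun_mul (hQ t x)

lemma norm_sq {H : Type*} [NormedAddCommGroup H] [InnerProductSpace ℝ H] {g U : ℝ → ℝ → H}
    (hU : IsTransportSolution c g U) :
    IsTransportSolution c (fun t x => 2 * inner ℝ (U t x) (g t x))
      (fun t x => ‖U t x‖ ^ 2) := fun t x => by
  simpa using (hU t x).norm_sq

lemma norm_le {ε κ t₀ t x : ℝ} (h : IsTransportSolution c g U) (hc : |c| ≤ 1) (ht : t₀ ≤ t)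
    (hU : ∀ y, |y - x| ≤ t - t₀ → ‖U t₀ y‖ ≤ ε)
    (hg : ∀ s ∈ Set.Ico t₀ t, ∀ y, |y - x| ≤ t - s → ‖g s y‖ ≤ κ) :
    ‖U t x‖ ≤ ε + κ * (t - t₀) := by
  have mem_cone {s : ℝ} (hs : s ≤ t) : |x + c * (s - t) - x| ≤ t - s := by
    rw [add_sub_cancel_left, abs_mul, abs_sub_comm, abs_of_nonneg (sub_nonneg.2 hs)]
    exact mul_le_of_le_one_left (sub_nonneg.2 hs) hc
  have increment := norm_image_sub_le_of_norm_deriv_le_segment'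
    (fun s _ => (h.hasDerivAt_along t x s).hasDerivWithinAt)
    (fun s hs => hg s hs _ (mem_cone hs.2.le)) t ⟨ht, le_rfl⟩
  rw [sub_self, mul_zero, add_zero] at increment
  calc ‖U t x‖ ≤ ‖U t₀ (x + c * (t₀ - t))‖ + ‖U t x - U t₀ (x + c * (t₀ - t))‖ :=
        norm_le_insert' _ _
    _ ≤ ε + κ * (t - t₀) := add_le_add (hU _ (mem_cone ht)) increment

/-- Translating the variable of integration by `c (t - t₀)` turns the time derivative into the
derivative along characteristics, so the flux `c ∂ₓF` never has to be integrated by parts. -/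
theorem hasDerivAt_integral {F : ℝ → ℝ → E} {t₀ : ℝ} (h : IsTransportSolution c g F)
    (hFm : ∀ t, AEStronglyMeasurable (F t)) (hF : Integrable (F t₀))
    (hgm : AEStronglyMeasurable (g t₀))
    (hg : (fun p : ℝ × ℝ => g p.1 p.2) =O[𝓝 t₀ ×ˢ ⊤] fun p => (1 + p.2 ^ 2)⁻¹) :
    HasDerivAt (fun t => ∫ x, F t x) (∫ x, g t₀ x) t₀ := by
  obtain ⟨C, hC⟩ := isBigO_prod_top_iff.1 hg
  have hC0 : 0 ≤ C := by simpa using (norm_nonneg _).trans (hC.self_of_nhds 0)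
  have small_shift : ∀ᶠ t in 𝓝 t₀, |c * (t - t₀)| < 1 := by
    have : ContinuousAt (fun t => |c * (t - t₀)|) t₀ := by fun_prop
    exact this.eventually (gt_mem_nhds (by simp))
  have bound : ∀ᶠ t in 𝓝 t₀, ∀ x, ‖g t (x + c * (t - t₀))‖ ≤ C * (4 * (1 + x ^ 2)⁻¹) := by
    filter_upwards [hC, small_shift] with t ht hshift x
    have hsq : (c * (t - t₀)) ^ 2 ≤ 1 := (sq_le_one_iff_abs_le_one _).2 hshift.le
    calc ‖g t (x + c * (t - t₀))‖ ≤ C * (1 + (x + c * (t - t₀)) ^ 2)⁻¹ := by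
          simpa [abs_of_nonneg, add_nonneg, sq_nonneg] using ht (x + c * (t - t₀))
      _ ≤ C * (4 * (1 + x ^ 2)⁻¹) := by
          gcongr
          refine (inv_one_add_sq_add_le _ _).trans ?_
          gcongr
          linarith
  have derivative := (hasDerivAt_integral_of_dominated_loc_of_deriv_le
    (F := fun t x => F t (x + c * (t - t₀))) (F' := fun t x => g t (x + c * (t - t₀)))
    bound (.of_forall fun t => (hFm t).comp_measurePreserving (measurePreserving_add_right _ _))
    (by simpa using hF) (by simpa using hgm) (.of_forall fun x t ht => ht x)
    ((integrable_inv_one_add_sq.const_mul 4).const_mul C)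
    (.of_forall fun x t _ => h.hasDerivAt_along t₀ x t)).2
  simpa only [integral_add_right_eq_self, sub_self, mul_zero, add_zero] using derivative

end IsTransportSolution

lemma isTransportSolution_of_differentiable {U : ℝ → ℝ → E}
    (hU : Differentiable ℝ fun p : ℝ × ℝ => U p.1 p.2) :
    IsTransportSolution c
      (fun t x => deriv (fun s => U s x) t + c • deriv (fun y => U t y) x) U := by
  intro t x
  have chain {a b : ℝ → ℝ} {a' b' r : ℝ} (ha : HasDerivAt a a' r) (hb : HasDerivAt b b' r) :
      HasDerivAt (fun r => U (a r) (b r))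
        (fderiv ℝ (fun p : ℝ × ℝ => U p.1 p.2) (a r, b r) (a', b')) r :=
    (hU (a r, b r)).hasFDerivAt.comp_hasDerivAt (f := fun r => (a r, b r)) r (ha.prodMk hb)
  have hsplit : ((1, c) : ℝ × ℝ) = (1, 0) + c • (0, 1) := by simp
  have along := chain (hasDerivAt_id' t) (hasDerivAt_characteristic c t x t)
  rw [hsplit, map_add, map_smul] at along
  simp only [(chain (hasDerivAt_id' t) (hasDerivAt_const t x)).deriv,
    (chain (hasDerivAt_const x t) (hasDerivAt_id' x)).deriv]
  simpa using along

end Transport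

section LocalDecay

lemma lt_of_forall_backward_cone_lt {f : ℝ → ℝ → ℝ} {A t₀ T X : ℝ}
    (hf : Continuous fun p : ℝ × ℝ => f p.1 p.2) (hT : t₀ ≤ T)
    (hstep : ∀ t ∈ Set.Icc t₀ T, ∀ x, |x - X| ≤ T - t →
      (∀ s ∈ Set.Ico t₀ t, ∀ y, |y - x| ≤ t - s → f s y < A) → f t x < A) :
    f T X < A := by
  by_contra! hexit
  let S : Set (ℝ × ℝ) := {p | (t₀ ≤ p.1 ∧ |p.2 - X| ≤ T - p.1) ∧ A ≤ f p.1 p.2}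
  have hS_closed : IsClosed S := by
    have cone_closed : IsClosed {p : ℝ × ℝ | |p.2 - X| ≤ T - p.1} :=
      isClosed_le (by fun_prop) (by fun_prop)
    exact ((isClosed_le continuous_const continuous_fst).inter cone_closed).inter
      (isClosed_le continuous_const hf)
  have hS_bounded : S ⊆ Set.Icc t₀ T ×ˢ Set.Icc (X - (T - t₀)) (X + (T - t₀)) := by
    rintro ⟨t, x⟩ ⟨⟨ht, hx⟩, -⟩
    have hdist := abs_nonneg (x - X)
    have ⟨hleft, hright⟩ := abs_le.1 hx
    dsimp only at *
    exact ⟨⟨ht, by linarith⟩, by linarith, by linarith⟩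
  obtain ⟨⟨t, x⟩, ⟨⟨ht, hx⟩, hA⟩, hfirst⟩ :=
    ((isCompact_Icc.prod isCompact_Icc).of_isClosed_subset hS_closed hS_bounded).exists_isMinOn
      ⟨(T, X), ⟨hT, by simp⟩, hexit⟩ continuous_fst.continuousOn
  have hxT : t ≤ T := by linarith [(abs_nonneg _).trans hx]
  refine (hstep t ⟨ht, hxT⟩ x hx fun s hs y hy => ?_).not_ge hA
  by_contra! hsy
  have hyX : |y - X| ≤ T - s := by linarith [abs_sub_le y x X]
  exact (hfirst (a := (s, y)) ⟨⟨hs.1, hyX⟩, hsy⟩).not_gt hs.2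

variable {E F : Type*} [NormedAddCommGroup E] [NormedSpace ℝ E]
  [NormedAddCommGroup F] [NormedSpace ℝ F]

/-- A continuous solution `Φ = (U, V)` of the diagonal semilinear system
`∂ₜU + c₁ ∂ₓU = G₁(U, V)`, `∂ₜV + c₂ ∂ₓV = G₂(U, V)` whose speeds are at most one, so that
values propagate inside the cones `|y - x| ≤ t - s`. -/
structure IsSemilinearSolution (c₁ c₂ : ℝ) (G : E × F → E × F) (Φ : ℝ → ℝ → E × F) : Prop where
  abs_speed_fst_le : |c₁| ≤ 1
  abs_speed_snd_le : |c₂| ≤ 1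
  continuous : Continuous fun p : ℝ × ℝ => Φ p.1 p.2
  fst : IsTransportSolution c₁ (fun t x => (G (Φ t x)).1) fun t x => (Φ t x).1
  snd : IsTransportSolution c₂ (fun t x => (G (Φ t x)).2) fun t x => (Φ t x).2

namespace IsSemilinearSolution

variable {c₁ c₂ : ℝ} {G : E × F → E × F} {Φ : ℝ → ℝ → E × F}

lemma comp_neg_neg (h : IsSemilinearSolution c₁ c₂ G Φ) :
    IsSemilinearSolution c₁ c₂ (fun p => -G p) fun t x => Φ (-t) (-x) where
  abs_speed_fst_le := h.abs_speed_fst_le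
  abs_speed_snd_le := h.abs_speed_snd_le
  continuous := h.continuous.comp (continuous_fst.neg.prodMk continuous_snd.neg)
  fst := h.fst.comp_neg_neg
  snd := h.snd.comp_neg_neg

/-- Bootstrap on the backward cone: as long as `‖Φ‖ < 2ε`, the source is too small for `Φ` to
grow from `ε` to `2ε` within the available time. -/
lemma norm_lt_two_mul {L ρ ε t₀ t x : ℝ} (h : IsSemilinearSolution c₁ c₂ G Φ)
    (hG : ∀ p, ‖p‖ ≤ ρ → ‖G p‖ ≤ L * ‖p‖) (hL : 0 ≤ L) (hε : 0 < ε) (hερ : 2 * ε ≤ ρ)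
    (ht : t₀ ≤ t) (htL : 2 * L * (t - t₀) < 1)
    (hdata : ∀ y, |y - x| ≤ t - t₀ → ‖Φ t₀ y‖ ≤ ε) :
    ‖Φ t x‖ < 2 * ε := by
  refine lt_of_forall_backward_cone_lt (f := fun t x => ‖Φ t x‖) h.continuous.norm ht
    fun s hs y hy hcone => ?_
  have data_near (z : ℝ) (hz : |z - y| ≤ s - t₀) : ‖Φ t₀ z‖ ≤ ε :=
    hdata z (by linarith [abs_sub_le z y x])
  have source_small (r : ℝ) (hr : r ∈ Set.Ico t₀ s) (z : ℝ) (hz : |z - y| ≤ s - r) :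
      ‖G (Φ r z)‖ ≤ L * (2 * ε) :=
    (hG _ ((hcone r hr z hz).le.trans hερ)).trans (by gcongr; exact (hcone r hr z hz).le)
  have growth : ε + L * (2 * ε) * (s - t₀) < 2 * ε := by
    have : 2 * L * (s - t₀) ≤ 2 * L * (t - t₀) := by gcongr; exact hs.2
    nlinarith
  exact max_lt
    ((h.fst.norm_le h.abs_speed_fst_le hs.1 (fun z hz => (norm_fst_le _).trans (data_near z hz))
      fun r hr z hz => (norm_fst_le _).trans (source_small r hr z hz)).trans_lt growth)
    ((h.snd.norm_le h.abs_speed_snd_le hs.1 (fun z hz => (norm_snd_le _).trans (data_near z hz))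
      fun r hr z hz => (norm_snd_le _).trans (source_small r hr z hz)).trans_lt growth)

lemma norm_le_of_initial_decay {L ρ C t₀ t x : ℝ} (h : IsSemilinearSolution c₁ c₂ G Φ)
    (hG : ∀ p, ‖p‖ ≤ ρ → ‖G p‖ ≤ L * ‖p‖) (hL : 0 ≤ L) (hC : 0 < C)
    (hdata : ∀ y, ‖Φ t₀ y‖ ≤ C * (1 + y ^ 2)⁻¹) (hx : 8 * C * (1 + x ^ 2)⁻¹ ≤ ρ)
    (ht : t₀ ≤ t) (ht₁ : t ≤ t₀ + 1) (htL : 2 * L * (t - t₀) < 1) :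
    ‖Φ t x‖ ≤ 8 * C * (1 + x ^ 2)⁻¹ := by
  have data_near (y : ℝ) (hy : |y - x| ≤ t - t₀) : ‖Φ t₀ y‖ ≤ 4 * C * (1 + x ^ 2)⁻¹ := by
    have hsq : (y - x) ^ 2 ≤ 1 := (sq_le_one_iff_abs_le_one _).2 (by linarith)
    have peetre := inv_one_add_sq_add_le x (y - x)
    rw [add_sub_cancel] at peetre
    calc ‖Φ t₀ y‖ ≤ C * (1 + y ^ 2)⁻¹ := hdata y
      _ ≤ C * (2 * (1 + (y - x) ^ 2) * (1 + x ^ 2)⁻¹) := by gcongr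
      _ ≤ C * (2 * (1 + 1) * (1 + x ^ 2)⁻¹) := by gcongr
      _ = 4 * C * (1 + x ^ 2)⁻¹ := by ring
  have bound := h.norm_lt_two_mul hG hL (by positivity) (by linarith) ht htL data_near
  linarith

lemma isBigO_nhdsGE {t₀ : ℝ} (h : IsSemilinearSolution c₁ c₂ G Φ)
    (hG : G =O[𝓝 0] fun p => p) (hdata : Φ t₀ =O[⊤] fun x => (1 + x ^ 2)⁻¹) :
    (fun p : ℝ × ℝ => Φ p.1 p.2) =O[𝓝[≥] t₀ ×ˢ ⊤] fun p => (1 + p.2 ^ 2)⁻¹ := by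
  obtain ⟨L, hL, hGL⟩ := hG.exists_pos
  obtain ⟨ρ, hρ, hGρ⟩ := Metric.nhds_basis_closedBall.eventually_iff.1 hGL.bound
  obtain ⟨C, hC, hCdata⟩ := hdata.exists_pos
  have far : ∀ᶠ x in cocompact ℝ, 8 * C * (1 + x ^ 2)⁻¹ ≤ ρ := by
    have weight_tendsto : Tendsto (fun x : ℝ => (1 + x ^ 2)⁻¹) (cocompact ℝ) (𝓝 0) := by
      have sq_atTop := (tendsto_pow_atTop two_ne_zero).comp (tendsto_norm_cocompact_atTop (E := ℝ))
      simpa only [Function.comp_def, Real.norm_eq_abs, sq_abs] using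
        tendsto_inv_atTop_zero.comp (tendsto_atTop_add_const_left _ 1 sq_atTop)
    simpa using (weight_tendsto.const_mul (8 * C)).eventually_le_const (by simpa using hρ)
  obtain ⟨K, hK, hKfar⟩ := mem_cocompact.1 far
  obtain ⟨M, hM⟩ := (isCompact_Icc.prod hK).exists_bound_of_continuousOn
    (s := Set.Icc t₀ (t₀ + 1) ×ˢ K) (f := fun p : ℝ × ℝ => (1 + p.2 ^ 2) * ‖Φ p.1 p.2‖)
    (by have := h.continuous; fun_prop)
  have short_time : ∀ᶠ t in 𝓝 t₀, 2 * L * (t - t₀) < 1 := by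
    have : ContinuousAt (fun t => 2 * L * (t - t₀)) t₀ := by fun_prop
    exact this.eventually (gt_mem_nhds (by simp))
  refine isBigO_prod_top_iff.2 ⟨max (8 * C) M, ?_⟩
  filter_upwards [self_mem_nhdsWithin, nhdsWithin_le_nhds short_time,
    Icc_mem_nhdsGE (lt_add_one t₀)] with t ht htL ht₁ x
  have hx : 0 < 1 + x ^ 2 := by positivity
  rw [Real.norm_of_nonneg (inv_nonneg.2 hx.le)]
  by_cases hxK : x ∈ K
  · have near : ‖Φ t x‖ ≤ M * (1 + x ^ 2)⁻¹ := by
      rw [← div_eq_mul_inv, le_div_iff₀' hx]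
      exact (le_abs_self _).trans (hM (t, x) ⟨ht₁, hxK⟩)
    exact near.trans (by gcongr; exact le_max_right _ _)
  · refine (h.norm_le_of_initial_decay (fun p hp => hGρ (by simpa using hp)) hL.le hC (fun y => ?_)
      (hKfar hxK) ht ht₁.2 htL).trans (by gcongr; exact le_max_left _ _)
    simpa [abs_of_nonneg, add_nonneg, sq_nonneg] using isBigOWith_top.1 hCdata y

theorem isBigO_nhds {t₀ : ℝ} (h : IsSemilinearSolution c₁ c₂ G Φ)
    (hG : G =O[𝓝 0] fun p => p) (hdata : Φ t₀ =O[⊤] fun x => (1 + x ^ 2)⁻¹) :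
    (fun p : ℝ × ℝ => Φ p.1 p.2) =O[𝓝 t₀ ×ˢ ⊤] fun p => (1 + p.2 ^ 2)⁻¹ := by
  have reflected_data : (fun x => Φ (- -t₀) (-x)) =O[⊤] fun x => (1 + x ^ 2)⁻¹ := by
    simpa only [Function.comp_def, neg_neg, even_two.neg_pow] using
      hdata.comp_tendsto (tendsto_top (f := fun x : ℝ => -x))
  have past : (fun p : ℝ × ℝ => Φ p.1 p.2) =O[𝓝[≤] t₀ ×ˢ ⊤] fun p => (1 + p.2 ^ 2)⁻¹ := by
    simpa only [Function.comp_def, Prod.map, neg_neg, even_two.neg_pow] using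
      (h.comp_neg_neg.isBigO_nhdsGE hG.neg_left reflected_data).comp_tendsto
        ((tendsto_neg_nhdsLE (a := t₀)).prodMap (tendsto_top (f := fun x : ℝ => -x)))
  rw [← nhdsLE_sup_nhdsGE, Filter.sup_prod]
  exact past.sup (h.isBigO_nhdsGE hG hdata)

end IsSemilinearSolution

end LocalDecay

section Weight

section Growth

variable {α : Type*} {l : Filter α} {r w b : α → ℝ} {E : Type*} [NormedAddCommGroup E]

lemma one_add_abs_sq_isBigO : (fun x : ℝ => (1 + |x|) ^ 2) =O[⊤] fun x => 1 + x ^ 2 := by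
  refine .of_bound 2 (.of_forall fun x => ?_)
  rw [Real.norm_of_nonneg (by positivity), Real.norm_of_nonneg (by positivity), ← sq_abs x]
  linarith [sq_nonneg (1 - |x|)]

lemma inv_one_add_sq_isBigO_one : (fun a => (1 + r a ^ 2)⁻¹) =O[l] fun _ => (1 : ℝ) :=
  .of_norm_le fun a => by
    rw [Real.norm_of_nonneg (by positivity)]
    exact inv_le_one_of_one_le₀ (by simp [sq_nonneg])

lemma isBigO_mul_of_quadratic (hw : w =O[l] fun a => (1 + |r a|) ^ 2)
    (hb : b =O[l] fun a => (1 + r a ^ 2)⁻¹ ^ 2) :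
    (fun a => w a * b a) =O[l] fun a => (1 + r a ^ 2)⁻¹ := by
  refine ((hw.trans (one_add_abs_sq_isBigO.comp_tendsto tendsto_top)).mul hb).congr_right
    fun a => ?_
  have : 1 + r a ^ 2 ≠ 0 := by positivity
  simp only [Function.comp_apply]
  field_simp

lemma integrable_of_isBigO_inv_one_add_sq {f : ℝ → E} (hf : AEStronglyMeasurable f)
    (h : f =O[⊤] fun x => (1 + x ^ 2)⁻¹) : Integrable f := by
  obtain ⟨C, hC⟩ := h.bound
  exact (integrable_inv_one_add_sq.norm.const_mul C).mono' hf
    (.of_forall fun x => by simpa using hC x)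

lemma isBigO_inv_one_add_sq_of_schwartz [NormedSpace ℝ E] {f : ℝ → E}
    (hf : ∃ g : SchwartzMap ℝ E, ∀ x, g x = f x) : f =O[⊤] fun x => (1 + x ^ 2)⁻¹ := by
  obtain ⟨g, hg⟩ := hf
  obtain ⟨C₀, -, hC₀⟩ := g.decay 0 0
  obtain ⟨C₂, -, hC₂⟩ := g.decay 2 0
  refine .of_bound (C₀ + C₂) (.of_forall fun x => ?_)
  have bounded : ‖f x‖ ≤ C₀ := by simpa [hg] using hC₀ x
  have second_moment : x ^ 2 * ‖f x‖ ≤ C₂ := by simpa [hg] using hC₂ x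
  rw [Real.norm_of_nonneg (by positivity), ← div_eq_mul_inv, le_div_iff₀' (by positivity)]
  linarith

lemma isBigO_one_add_abs_of_forall_norm_le {f : ℝ → E} {C : ℝ} (hf : ∀ x, ‖f x‖ ≤ C) :
    f =O[⊤] fun x => 1 + |x| := by
  have bounded : f =O[⊤] fun _ => (1 : ℝ) := isBigO_of_le' _ fun x => by simpa using hf x
  exact bounded.trans (.of_norm_le fun x => by simp)

lemma isBigO_one_add_abs_pow_succ_of_deriv [NormedSpace ℝ E] {f : ℝ → E} {k : ℕ}
    (hf : Differentiable ℝ f) (h : deriv f =O[⊤] fun x => (1 + |x|) ^ k) :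
    f =O[⊤] fun x => (1 + |x|) ^ (k + 1) := by
  obtain ⟨C, hC0, hC⟩ := h.exists_nonneg
  have deriv_le (x : ℝ) : ‖deriv f x‖ ≤ C * (1 + |x|) ^ k := by
    simpa [abs_of_nonneg, add_nonneg] using isBigOWith_top.1 hC x
  refine .of_bound (‖f 0‖ + C) (.of_forall fun x => ?_)
  have increment : ‖f x - f 0‖ ≤ C * (1 + |x|) ^ k * |x| := by
    have mvt := (convex_closedBall (0 : ℝ) |x|).norm_image_sub_le_of_norm_deriv_le
      (C := C * (1 + |x|) ^ k) (fun y _ => hf y)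
      (fun y hy => (deriv_le y).trans (by gcongr 3; exact mem_closedBall_zero_iff.1 hy))
      (Metric.mem_closedBall_self (abs_nonneg x)) (y := x) (by simp)
    simpa using mvt
  have one_le : 1 ≤ (1 + |x|) ^ (k + 1) := one_le_pow₀ (by linarith [abs_nonneg x])
  rw [Real.norm_of_nonneg (by positivity)]
  calc ‖f x‖ ≤ ‖f 0‖ + ‖f x - f 0‖ := norm_le_insert' _ _
    _ ≤ ‖f 0‖ * (1 + |x|) ^ (k + 1) + C * (1 + |x|) ^ k * (1 + |x|) := by
        gcongr
        · exact le_mul_of_one_le_right (norm_nonneg _) one_le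
        · refine increment.trans ?_
          gcongr
          linarith
    _ = (‖f 0‖ + C) * (1 + |x|) ^ (k + 1) := by ring

end Growth

section Rescaling

variable {f lam : ℝ → ℝ} {c t₀ : ℝ}

lemma isTransportSolution_comp_div (hf : Differentiable ℝ f) (hlam : Differentiable ℝ lam)
    (hlam0 : ∀ t, lam t ≠ 0) :
    IsTransportSolution c
      (fun t x => c / lam t * deriv f (x / lam t)
        - deriv lam t / lam t * (x / lam t * deriv f (x / lam t)))
      fun t x => f (x / lam t) := by
  intro t x
  have chain := (hf _).hasDerivAt.comp t
    ((hasDerivAt_characteristic c t x t).fun_div (hlam t).hasDerivAt (hlam0 t))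
  simp only [sub_self, mul_zero, add_zero] at chain
  refine chain.congr_deriv ?_
  have := hlam0 t
  field_simp

lemma isBigO_one_add_abs_sq_of_deriv (hf : Differentiable ℝ f)
    (hf' : deriv f =O[⊤] fun x => 1 + |x|) :
    f =O[⊤] fun x => (1 + |x|) ^ 2 :=
  isBigO_one_add_abs_pow_succ_of_deriv hf (k := 1) (by simpa using hf')

lemma isBigO_one_add_abs_sq (hf : f =O[⊤] fun x => 1 + |x|) :
    f =O[⊤] fun x => (1 + |x|) ^ 2 :=
  hf.trans (.of_norm_le fun x => by
    rw [Real.norm_of_nonneg (by positivity)]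
    exact le_self_pow₀ (by simp) two_ne_zero)

lemma id_mul_isBigO_one_add_abs_sq (hf : f =O[⊤] fun x => 1 + |x|) :
    (fun x => x * f x) =O[⊤] fun x => (1 + |x|) ^ 2 := by
  simpa only [sq] using (IsBigO.of_norm_le fun x => by simp).mul hf

lemma isBigO_comp_div {k : ℕ} (hf : f =O[⊤] fun x => (1 + |x|) ^ k) (hlam : ContinuousAt lam t₀)
    (hlam0 : lam t₀ ≠ 0) :
    (fun p : ℝ × ℝ => f (p.2 / lam p.1)) =O[𝓝 t₀ ×ˢ ⊤] fun p => (1 + |p.2|) ^ k := by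
  have one_isBigO : (fun _ => (1 : ℝ)) =O[𝓝 t₀ ×ˢ ⊤] fun p : ℝ × ℝ => 1 + |p.2| :=
    .of_norm_le fun p => by simp
  have snd_isBigO : (fun p => p.2) =O[𝓝 t₀ ×ˢ ⊤] fun p : ℝ × ℝ => 1 + |p.2| :=
    .of_norm_le fun p => by simp
  have quotient_isBigO : (fun p : ℝ × ℝ => p.2 / lam p.1) =O[𝓝 t₀ ×ˢ ⊤] fun p => 1 + |p.2| := by
    simpa [div_eq_inv_mul] using
      (((hlam.inv₀ hlam0).isBigO_one ℝ).comp_tendsto tendsto_fst).mul snd_isBigO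
  exact (hf.comp_tendsto tendsto_top).trans ((one_isBigO.add quotient_isBigO.norm_left).pow k)

lemma transport_comp_div_isBigO (hf' : deriv f =O[⊤] fun x => 1 + |x|) (hlam : ContDiff ℝ 1 lam)
    (hlam0 : lam t₀ ≠ 0) :
    (fun p : ℝ × ℝ => c / lam p.1 * deriv f (p.2 / lam p.1)
        - deriv lam p.1 / lam p.1 * (p.2 / lam p.1 * deriv f (p.2 / lam p.1)))
      =O[𝓝 t₀ ×ˢ ⊤] fun p => (1 + |p.2|) ^ 2 := by
  have hlam_cont : ContinuousAt lam t₀ := hlam.continuous.continuousAt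
  have mul_isBigO {a h : ℝ → ℝ} (ha : ContinuousAt a t₀) (hh : h =O[⊤] fun x => (1 + |x|) ^ 2) :
      (fun p : ℝ × ℝ => a p.1 / lam p.1 * h (p.2 / lam p.1))
        =O[𝓝 t₀ ×ˢ ⊤] fun p => (1 + |p.2|) ^ 2 := by
    simpa using (((ha.div hlam_cont hlam0).isBigO_one ℝ).comp_tendsto tendsto_fst).mul
      (isBigO_comp_div hh hlam_cont hlam0)
  exact (mul_isBigO continuousAt_const (isBigO_one_add_abs_sq hf')).sub
    (mul_isBigO hlam.continuous_deriv_one.continuousAt (id_mul_isBigO_one_add_abs_sq hf'))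

lemma integrable_comp_div_mul {r : ℝ} {b : ℝ → ℝ} (hfm : Measurable f)
    (hf : f =O[⊤] fun x => (1 + |x|) ^ 2) (hr : r ≠ 0) (hbm : AEStronglyMeasurable b)
    (hb : b =O[⊤] fun x => (1 + x ^ 2)⁻¹ ^ 2) : Integrable fun x => f (x / r) * b x := by
  have rescaled := isBigO_top_of_prod_top
    (isBigO_comp_div hf (continuousAt_const (x := (0 : ℝ)) (y := r)) hr)
  exact integrable_of_isBigO_inv_one_add_sq
    ((hfm.comp (measurable_id.div_const r)).aestronglyMeasurable.mul hbm)
    (isBigO_mul_of_quadratic rescaled hb)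

end Rescaling

end Weight

section Virial

variable {H : Type*} [NormedAddCommGroup H] [InnerProductSpace ℝ H] {c t : ℝ}
  {g U : ℝ → ℝ → H} {ϕ lam : ℝ → ℝ}

lemma isBigO_inner {α : Type*} {l : Filter α} {r : α → ℝ} {a b : α → H} (ha : a =O[l] r)
    (hb : b =O[l] r) : (fun x => inner ℝ (a x) (b x)) =O[l] fun x => r x ^ 2 := by
  simpa only [sq] using (IsBigO.of_norm_le fun x => norm_inner_le_norm _ _).trans
    (ha.norm_left.mul hb.norm_left)

section Integrable

variable {f : ℝ → ℝ} {r : ℝ} {a b : ℝ → H}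

lemma integrable_comp_div_mul_inner (hfm : Measurable f) (hf : f =O[⊤] fun x => (1 + |x|) ^ 2)
    (hr : r ≠ 0) (ham : AEStronglyMeasurable a) (hbm : AEStronglyMeasurable b)
    (ha : a =O[⊤] fun x => (1 + x ^ 2)⁻¹) (hb : b =O[⊤] fun x => (1 + x ^ 2)⁻¹) :
    Integrable fun x => f (x / r) * inner ℝ (a x) (b x) :=
  integrable_comp_div_mul hfm hf hr (ham.inner hbm) (isBigO_inner ha hb)

lemma integrable_comp_div_mul_norm_sq (hfm : Measurable f)
    (hf : f =O[⊤] fun x => (1 + |x|) ^ 2) (hr : r ≠ 0) (ham : AEStronglyMeasurable a)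
    (ha : a =O[⊤] fun x => (1 + x ^ 2)⁻¹) : Integrable fun x => f (x / r) * ‖a x‖ ^ 2 := by
  simpa only [real_inner_self_eq_norm_sq] using
    integrable_comp_div_mul_inner hfm hf hr ham ham ha ha

end Integrable

theorem IsTransportSolution.hasDerivAt_integral_comp_div_mul_norm_sq
    (hU : IsTransportSolution c g U)
    (hUm : ∀ t, AEStronglyMeasurable (U t)) (hgm : AEStronglyMeasurable (g t))
    (hUO : (fun p : ℝ × ℝ => U p.1 p.2) =O[𝓝 t ×ˢ ⊤] fun p => (1 + p.2 ^ 2)⁻¹)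
    (hgO : (fun p : ℝ × ℝ => g p.1 p.2) =O[𝓝 t ×ˢ ⊤] fun p => (1 + p.2 ^ 2)⁻¹)
    (hϕ : Differentiable ℝ ϕ) (hϕ' : deriv ϕ =O[⊤] fun x => 1 + |x|)
    (hlam : ContDiff ℝ 1 lam) (hlam0 : ∀ t, lam t ≠ 0) :
    HasDerivAt (fun s => ∫ x, ϕ (x / lam s) * ‖U s x‖ ^ 2)
      (∫ x, ((c / lam t * deriv ϕ (x / lam t)
          - deriv lam t / lam t * (x / lam t * deriv ϕ (x / lam t))) * ‖U t x‖ ^ 2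
        + ϕ (x / lam t) * (2 * inner ℝ (U t x) (g t x)))) t := by
  have hϕ_growth := isBigO_one_add_abs_sq_of_deriv hϕ hϕ'
  have hϕ_meas := hϕ.continuous.measurable
  have norm_sq_decay := hUO.norm_left.pow 2
  have norm_sq_meas (s : ℝ) : AEStronglyMeasurable fun x => ‖U s x‖ ^ 2 := (hUm s).norm.pow 2
  have weight_meas (s : ℝ) : AEStronglyMeasurable fun x => ϕ (x / lam s) :=
    (hϕ_meas.comp (measurable_id.div_const _)).aestronglyMeasurable
  have weight_deriv_meas : AEStronglyMeasurable fun x => c / lam t * deriv ϕ (x / lam t)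
      - deriv lam t / lam t * (x / lam t * deriv ϕ (x / lam t)) :=
    Measurable.aestronglyMeasurable (by fun_prop)
  exact ((isTransportSolution_comp_div hϕ (hlam.differentiable one_ne_zero) hlam0).mul
      hU.norm_sq).hasDerivAt_integral
    (fun s => (weight_meas s).mul (norm_sq_meas s))
    (integrable_comp_div_mul_norm_sq hϕ_meas hϕ_growth (hlam0 t) (hUm t)
      (isBigO_top_of_prod_top hUO))
    ((weight_deriv_meas.mul (norm_sq_meas t)).add
      ((weight_meas t).mul (((hUm t).inner hgm).const_mul 2)))
    ((isBigO_mul_of_quadratic (transport_comp_div_isBigO hϕ' hlam (hlam0 t)) norm_sq_decay).add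
      (isBigO_mul_of_quadratic
        (isBigO_comp_div hϕ_growth hlam.continuous.continuousAt (hlam0 t))
        ((isBigO_inner hUO hgO).const_mul_left 2)))

theorem IsTransportSolution.hasDerivAt_virial (hU : IsTransportSolution c g U)
    (hUm : ∀ t, AEStronglyMeasurable (U t)) (hgm : AEStronglyMeasurable (g t))
    (hUO : (fun p : ℝ × ℝ => U p.1 p.2) =O[𝓝 t ×ˢ ⊤] fun p => (1 + p.2 ^ 2)⁻¹)
    (hgO : (fun p : ℝ × ℝ => g p.1 p.2) =O[𝓝 t ×ˢ ⊤] fun p => (1 + p.2 ^ 2)⁻¹)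
    (hϕ : Differentiable ℝ ϕ) (hϕ' : deriv ϕ =O[⊤] fun x => 1 + |x|)
    (hlam : ContDiff ℝ 1 lam) (hlam0 : ∀ t, lam t ≠ 0) :
    HasDerivAt (fun s => ∫ x, ϕ (x / lam s) * ‖U s x‖ ^ 2)
      (c / lam t * (∫ x, deriv ϕ (x / lam t) * ‖U t x‖ ^ 2)
        - deriv lam t / lam t * (∫ x, x / lam t * deriv ϕ (x / lam t) * ‖U t x‖ ^ 2)
        + 2 * ∫ x, ϕ (x / lam t) * inner ℝ (U t x) (g t x)) t := by
  have hU_decay := isBigO_top_of_prod_top hUO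
  have transport := (integrable_comp_div_mul_norm_sq (measurable_deriv ϕ)
    (isBigO_one_add_abs_sq hϕ') (hlam0 t) (hUm t) hU_decay).const_mul (c / lam t)
  have dilation := (integrable_comp_div_mul_norm_sq (by fun_prop) (id_mul_isBigO_one_add_abs_sq hϕ')
    (hlam0 t) (hUm t) hU_decay).const_mul (deriv lam t / lam t)
  have source := (integrable_comp_div_mul_inner hϕ.continuous.measurable
    (isBigO_one_add_abs_sq_of_deriv hϕ hϕ') (hlam0 t) (hUm t) hgm hU_decay
    (isBigO_top_of_prod_top hgO)).const_mul 2
  refine (hU.hasDerivAt_integral_comp_div_mul_norm_sq hUm hgm hUO hgO hϕ hϕ' hlam hlam0).congr_deriv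
    ?_
  rw [← integral_const_mul, ← integral_const_mul, ← integral_const_mul,
    ← integral_sub' transport dilation, ← integral_add' (transport.sub dilation) source]
  refine integral_congr_ae (.of_forall fun x => ?_)
  simp only [Pi.add_apply, Pi.sub_apply]
  ring

theorem IsSemilinearSolution.hasDerivAt_virial_sub [ProperSpace H] {G : H × H → H × H}
    {Φ : ℝ → ℝ → H × H} (h : IsSemilinearSolution 1 (-1) G Φ) (hG : LocallyLipschitz G)
    (hG0 : G 0 = 0) (hdata : ∀ t, Φ t =O[⊤] fun x => (1 + x ^ 2)⁻¹)
    (hϕ : Differentiable ℝ ϕ) (hϕ' : deriv ϕ =O[⊤] fun x => 1 + |x|)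
    (hlam : ContDiff ℝ 1 lam) (hlam0 : ∀ t, lam t ≠ 0) :
    HasDerivAt (fun s => ∫ x, ϕ (x / lam s) * (‖(Φ s x).1‖ ^ 2 - ‖(Φ s x).2‖ ^ 2))
      (-(deriv lam t / lam t) * (∫ x, x / lam t * deriv ϕ (x / lam t)
          * (‖(Φ t x).1‖ ^ 2 - ‖(Φ t x).2‖ ^ 2))
        + 1 / lam t * (∫ x, deriv ϕ (x / lam t) * (‖(Φ t x).1‖ ^ 2 + ‖(Φ t x).2‖ ^ 2))
        + 2 * ∫ x, ϕ (x / lam t) *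
          (inner ℝ (Φ t x).1 (G (Φ t x)).1 - inner ℝ (Φ t x).2 (G (Φ t x)).2)) t := by
  have hΦ := h.isBigO_nhds (t₀ := t)
    (isBigO_comp_of_locallyLipschitz hG hG0 (continuousAt_id.isBigO_one ℝ)) (hdata t)
  have hGΦ := (isBigO_comp_of_locallyLipschitz hG hG0 (hΦ.trans inv_one_add_sq_isBigO_one)).trans hΦ
  have hΦm (s : ℝ) : AEStronglyMeasurable (Φ s) :=
    (h.continuous.comp (.prodMk_right s)).aestronglyMeasurable
  have hGΦm : AEStronglyMeasurable fun x => G (Φ t x) :=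
    hG.continuous.comp_aestronglyMeasurable (hΦm t)
  have hϕ_growth := isBigO_one_add_abs_sq_of_deriv hϕ hϕ'
  have hϕ_meas := hϕ.continuous.measurable
  have integrable_fst {f : ℝ → ℝ} (hfm : Measurable f) (hf : f =O[⊤] fun x => (1 + |x|) ^ 2)
      (s : ℝ) : Integrable fun x => f (x / lam s) * ‖(Φ s x).1‖ ^ 2 :=
    integrable_comp_div_mul_norm_sq hfm hf (hlam0 s) (hΦm s).fst (hdata s).prod_left_fst
  have integrable_snd {f : ℝ → ℝ} (hfm : Measurable f) (hf : f =O[⊤] fun x => (1 + |x|) ^ 2)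
      (s : ℝ) : Integrable fun x => f (x / lam s) * ‖(Φ s x).2‖ ^ 2 :=
    integrable_comp_div_mul_norm_sq hfm hf (hlam0 s) (hΦm s).snd (hdata s).prod_left_snd
  have inner_fst := integrable_comp_div_mul_inner hϕ_meas hϕ_growth (hlam0 t) (hΦm t).fst hGΦm.fst
    (hdata t).prod_left_fst (isBigO_top_of_prod_top hGΦ).prod_left_fst
  have inner_snd := integrable_comp_div_mul_inner hϕ_meas hϕ_growth (hlam0 t) (hΦm t).snd hGΦm.snd
    (hdata t).prod_left_snd (isBigO_top_of_prod_top hGΦ).prod_left_snd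
  have dilation_growth := id_mul_isBigO_one_add_abs_sq hϕ'
  have fst_virial := h.fst.hasDerivAt_virial (fun s => (hΦm s).fst) hGΦm.fst
    hΦ.prod_left_fst hGΦ.prod_left_fst hϕ hϕ' hlam hlam0
  have snd_virial := h.snd.hasDerivAt_virial (fun s => (hΦm s).snd) hGΦm.snd
    hΦ.prod_left_snd hGΦ.prod_left_snd hϕ hϕ' hlam hlam0
  simp only [mul_sub, mul_add, integral_sub (integrable_fst hϕ_meas hϕ_growth _)
    (integrable_snd hϕ_meas hϕ_growth _)]
  refine (fst_virial.sub snd_virial).congr_deriv ?_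
  rw [integral_sub inner_fst inner_snd,
    integral_sub (integrable_fst (by fun_prop) dilation_growth t)
      (integrable_snd (by fun_prop) dilation_growth t),
    integral_add (integrable_fst (by fun_prop) (isBigO_one_add_abs_sq hϕ') t)
      (integrable_snd (by fun_prop) (isBigO_one_add_abs_sq hϕ') t)]
  ring

end Virial

section Dirac

open scoped ComplexConjugate

lemma contDiff_evalW (W : MvPolynomial (Fin 4) ℂ) {n : WithTop ℕ∞} :
    ContDiff ℝ n fun p : ℂ × ℂ => evalW W p.1 p.2 := by
  have conj_smooth {f : ℂ × ℂ → ℂ} (hf : ContDiff ℝ n f) : ContDiff ℝ n fun p => conj (f p) :=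
    Complex.conjCLE.contDiff.comp hf
  induction W using MvPolynomial.induction_on with
  | C a => simpa [evalW] using contDiff_const
  | add P Q hP hQ => simpa [evalW] using hP.add hQ
  | mul_X P i hP =>
    have variable_smooth : ContDiff ℝ n fun p : ℂ × ℂ => ![p.1, conj p.1, p.2, conj p.2] i := by
      fin_cases i
      exacts [contDiff_fst, conj_smooth contDiff_fst, contDiff_snd, conj_smooth contDiff_snd]
    simpa [evalW] using hP.mul variable_smooth

lemma evalW_locallyLipschitz (W : MvPolynomial (Fin 4) ℂ) :
    LocallyLipschitz fun p : ℂ × ℂ => evalW W p.1 p.2 :=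
  (contDiff_evalW W).locallyLipschitz

lemma eq_zero_of_mul_conj_im_eq_zero {N : ℂ → ℂ} (hN : ContinuousAt N 0)
    (h : ∀ z, (z * conj (N z)).im = 0) : N 0 = 0 := by
  have along_line (a : ℂ) : (a * conj (N 0)).im = 0 := by
    have line_tendsto : Tendsto (fun r : ℝ => r * a) (𝓝[≠] 0) (𝓝 0) := by
      have : ContinuousAt (fun r : ℝ => r * a) 0 := by fun_prop
      simpa using this.tendsto.mono_left nhdsWithin_le_nhds
    have limit : Tendsto (fun r : ℝ => (a * conj (N (r * a))).im) (𝓝[≠] 0)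
        (𝓝 (a * conj (N 0)).im) :=
      (Complex.continuous_im.tendsto _).comp
        (((Complex.continuous_conj.tendsto _).comp (hN.tendsto.comp line_tendsto)).const_mul a)
    refine tendsto_nhds_unique limit (tendsto_const_nhds.congr' ?_)
    filter_upwards [self_mem_nhdsWithin] with r hr
    have hra := h (r * a)
    rw [mul_assoc, Complex.im_ofReal_mul] at hra
    exact ((mul_eq_zero.1 hra).resolve_left hr).symm
  exact Complex.ext (by simpa using along_line Complex.I) (by simpa using along_line 1)

/-- The sources `(i (m v - N₁), i (m u - N₂))` of the Dirac system with mass `m` and nonlinearity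
`(N₁, N₂)` at `p = (u, v)`, once the system is solved for `(∂ₜu + ∂ₓu, ∂ₜv - ∂ₓv)`. -/
def diracSource (m : ℝ) (N₁ N₂ : ℂ × ℂ → ℂ) (p : ℂ × ℂ) : ℂ × ℂ :=
  (Complex.I * (m * p.2 - N₁ p), Complex.I * (m * p.1 - N₂ p))

variable {m : ℝ} {N₁ N₂ : ℂ × ℂ → ℂ}

lemma diracSource_locallyLipschitz (hN₁ : LocallyLipschitz N₁) (hN₂ : LocallyLipschitz N₂) :
    LocallyLipschitz (diracSource m N₁ N₂) := by
  have scaled {f : ℂ × ℂ → ℂ} (a : ℂ) (hf : LocallyLipschitz f) :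
      LocallyLipschitz fun p => a * f p :=
    (lipschitzWith_smul a).locallyLipschitz.comp hf
  exact (scaled _ ((scaled _ LipschitzWith.prod_snd.locallyLipschitz).sub hN₁)).prodMk
    (scaled _ ((scaled _ LipschitzWith.prod_fst.locallyLipschitz).sub hN₂))

lemma diracSource_zero (hN₁ : ContinuousAt N₁ 0) (hN₂ : ContinuousAt N₂ 0)
    (hreal : ∀ z w, (z * conj (N₁ (z, w)) - w * conj (N₂ (z, w))).im = 0) :
    diracSource m N₁ N₂ 0 = 0 := by
  have N₁_zero : N₁ (0, 0) = 0 :=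
    eq_zero_of_mul_conj_im_eq_zero (N := fun z => N₁ (z, 0))
      (hN₁.comp_of_eq (by fun_prop) rfl) fun z => by simpa using hreal z 0
  have N₂_zero : N₂ (0, 0) = 0 :=
    eq_zero_of_mul_conj_im_eq_zero (N := fun w => N₂ (0, w))
      (hN₂.comp_of_eq (by fun_prop) rfl) fun w => neg_eq_zero.1 <| by
        simpa only [zero_mul, zero_sub, Complex.neg_im] using hreal 0 w
  simp [diracSource, ← Prod.mk_zero_zero, N₁_zero, N₂_zero]

lemma inner_diracSource_sub_inner_diracSource {z w : ℂ}
    (hreal : (z * conj (N₁ (z, w)) - w * conj (N₂ (z, w))).im = 0) :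
    inner ℝ z (diracSource m N₁ N₂ (z, w)).1 - inner ℝ w (diracSource m N₁ N₂ (z, w)).2
      = 2 * m * (z * conj w).im := by
  simp only [Complex.sub_im, Complex.mul_im, Complex.conj_im, Complex.conj_re] at hreal
  simp only [diracSource, Complex.inner, Complex.mul_re, Complex.mul_im, Complex.sub_re,
    Complex.sub_im, Complex.I_re, Complex.I_im, Complex.ofReal_re, Complex.ofReal_im,
    Complex.conj_re, Complex.conj_im]
  linear_combination -hreal

lemma isSemilinearSolution_diracSource {u v : ℝ → ℝ → ℂ}
    (hu : Differentiable ℝ fun p : ℝ × ℝ => u p.1 p.2)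
    (hv : Differentiable ℝ fun p : ℝ × ℝ => v p.1 p.2)
    (hequ : ∀ t x : ℝ, Complex.I * (deriv (fun s => u s x) t + deriv (fun y => u t y) x)
      + m * v t x = N₁ (u t x, v t x))
    (heqv : ∀ t x : ℝ, Complex.I * (deriv (fun s => v s x) t - deriv (fun y => v t y) x)
      + m * u t x = N₂ (u t x, v t x)) :
    IsSemilinearSolution 1 (-1) (diracSource m N₁ N₂) fun t x => (u t x, v t x) where
  abs_speed_fst_le := by simp
  abs_speed_snd_le := by simp
  continuous := hu.continuous.prodMk hv.continuous
  fst t x := (isTransportSolution_of_differentiable hu t x).congr_deriv <| by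
    simp only [diracSource, ← hequ, one_smul]
    linear_combination (deriv (fun s => u s x) t + deriv (fun y => u t y) x) * Complex.I_sq
  snd t x := (isTransportSolution_of_differentiable hv t x).congr_deriv <| by
    simp only [diracSource, ← heqv, neg_one_smul]
    linear_combination (deriv (fun s => v s x) t - deriv (fun y => v t y) x) * Complex.I_sq

theorem dirac_1d_virial_J_general {u v : ℝ → ℝ → ℂ} {ϕ lam : ℝ → ℝ}
    (hN₁ : LocallyLipschitz N₁) (hN₂ : LocallyLipschitz N₂)
    (hreal : ∀ z w, (z * conj (N₁ (z, w)) - w * conj (N₂ (z, w))).im = 0)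
    (hu : Differentiable ℝ fun p : ℝ × ℝ => u p.1 p.2)
    (hv : Differentiable ℝ fun p : ℝ × ℝ => v p.1 p.2)
    (hu_decay : ∀ t, u t =O[⊤] fun x => (1 + x ^ 2)⁻¹)
    (hv_decay : ∀ t, v t =O[⊤] fun x => (1 + x ^ 2)⁻¹)
    (hequ : ∀ t x : ℝ, Complex.I * (deriv (fun s => u s x) t + deriv (fun y => u t y) x)
      + m * v t x = N₁ (u t x, v t x))
    (heqv : ∀ t x : ℝ, Complex.I * (deriv (fun s => v s x) t - deriv (fun y => v t y) x)
      + m * u t x = N₂ (u t x, v t x))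
    (hϕ : Differentiable ℝ ϕ) (hϕ' : deriv ϕ =O[⊤] fun x => 1 + |x|)
    (hlam : ContDiff ℝ 1 lam) (hlam0 : ∀ t, lam t ≠ 0) (t : ℝ) :
    HasDerivAt (fun s => ∫ x, ϕ (x / lam s) * (‖u s x‖ ^ 2 - ‖v s x‖ ^ 2))
      (-(deriv lam t / lam t) *
          (∫ x, x / lam t * deriv ϕ (x / lam t) * (‖u t x‖ ^ 2 - ‖v t x‖ ^ 2))
        + 1 / lam t * (∫ x, deriv ϕ (x / lam t) * (‖u t x‖ ^ 2 + ‖v t x‖ ^ 2))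
        + 4 * m * ∫ x, ϕ (x / lam t) * (u t x * conj (v t x)).im) t := by
  have virial := (isSemilinearSolution_diracSource hu hv hequ heqv).hasDerivAt_virial_sub (t := t)
    (diracSource_locallyLipschitz hN₁ hN₂)
    (diracSource_zero hN₁.continuous.continuousAt hN₂.continuous.continuousAt hreal)
    (fun s => (hu_decay s).prod_left (hv_decay s)) hϕ hϕ' hlam hlam0
  refine virial.congr_deriv ?_
  simp only [inner_diracSource_sub_inner_diracSource (hreal _ _), mul_left_comm (ϕ _),
    integral_const_mul]
  ring

end Dirac

end

/-- Lemma 3.4 (`lem:u-v`): the virial identity for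
`J(t) = ∫ ϕ(x/λ(t)) (|u|²−|v|²)` for the 1D Dirac system. -/
theorem dirac_1d_virial_J
    (m : ℝ) (u v : ℝ → ℝ → ℂ)
    (W : MvPolynomial (Fin 4) ℂ)
    -- u conj(∂_{ū}W) − v conj(∂_{v̄}W) is real
    (hWreal : ∀ z w : ℂ,
      (z * (starRingEnd ℂ) (evalW (MvPolynomial.pderiv 1 W) z w)
        - w * (starRingEnd ℂ) (evalW (MvPolynomial.pderiv 3 W) z w)).im = 0)
    (hu : ContDiff ℝ (⊤ : ℕ∞) (fun p : ℝ × ℝ => u p.1 p.2))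
    (hv : ContDiff ℝ (⊤ : ℕ∞) (fun p : ℝ × ℝ => v p.1 p.2))
    (huS : ∀ t : ℝ, ∃ f : SchwartzMap ℝ ℂ, ∀ x : ℝ, f x = u t x)
    (hvS : ∀ t : ℝ, ∃ f : SchwartzMap ℝ ℂ, ∀ x : ℝ, f x = v t x)
    (hequ : ∀ t x : ℝ,
      Complex.I * (deriv (fun s => u s x) t + deriv (fun y => u t y) x) + (m : ℂ) * v t x
        = evalW (MvPolynomial.pderiv 1 W) (u t x) (v t x))
    (heqv : ∀ t x : ℝ,
      Complex.I * (deriv (fun s => v s x) t - deriv (fun y => v t y) x) + (m : ℂ) * u t x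
        = evalW (MvPolynomial.pderiv 3 W) (u t x) (v t x))
    -- the weight and the scaling function
    (ϕ : ℝ → ℝ)
    (hϕ : ContDiff ℝ (⊤ : ℕ∞) ϕ)
    (hϕbdd : ∃ C : ℝ, ∀ x : ℝ, |ϕ x| + |deriv ϕ x| ≤ C)
    (lam : ℝ → ℝ) (hlam : ContDiff ℝ 1 lam) (hlampos : ∀ t, 0 < lam t) :
    ∀ t : ℝ,
      HasDerivAt
        (fun s : ℝ => ∫ x : ℝ, ϕ (x / lam s) * (‖u s x‖ ^ 2 - ‖v s x‖ ^ 2))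
        (-(deriv lam t / lam t) *
            (∫ x : ℝ, (x / lam t) * deriv ϕ (x / lam t) * (‖u t x‖ ^ 2 - ‖v t x‖ ^ 2))
          + (1 / lam t) *
            (∫ x : ℝ, deriv ϕ (x / lam t) * (‖u t x‖ ^ 2 + ‖v t x‖ ^ 2))
          + 4 * m *
            (∫ x : ℝ, ϕ (x / lam t) * (u t x * (starRingEnd ℂ) (v t x)).im)) t := by
  obtain ⟨C, hC⟩ := hϕbdd
  exact dirac_1d_virial_J_general (evalW_locallyLipschitz _) (evalW_locallyLipschitz _) hWreal
    (hu.differentiable (by simp)) (hv.differentiable (by simp))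
    (fun t => isBigO_inv_one_add_sq_of_schwartz (huS t))
    (fun t => isBigO_inv_one_add_sq_of_schwartz (hvS t)) hequ heqv (hϕ.differentiable (by simp))
    (isBigO_one_add_abs_of_forall_norm_le
      fun x => (le_add_of_nonneg_left (abs_nonneg _)).trans (hC x))
    hlam fun t => (hlampos t).ne'
end

section
/- Let n ≥ 1, N ≥ 1, m ∈ ℝ, let α¹, …, αⁿ, β be Hermitian N × N complex matrices with αʲαᵏ + αᵏαʲ = 2δ_{jk}·Id, αʲβ + βαʲ = 0, β² = Id, let V : ℝⁿ × ℂᴺ → ℝ be real-valued, and let ψ be a global classical solution of i∂_tψ = −i Σ_j αʲ∂_jψ + (m + V(x,ψ))βψ. Fix λ > 0 and b > 0, set θ = (θ₁,…,θₙ) with θ_j = −(1+b) for all j, and define ϕ(x) = Σ_{j=1}^n tanh(x_j) and I(t) = ∫_{ℝⁿ} ϕ((x + tθ)/λ) ψ(t,x)†ψ(t,x) dx. Then for all t: d/dt I(t) ≤ −(b/λ) Σ_{j=1}^n ∫_{ℝⁿ} sech²((x_j − (1+b)t)/λ) ψ(t,x)†ψ(t,x) dx. -/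
open MeasureTheory Filter Matrix

/-!
The charge density `ρ = ψ†ψ` and the fluxes `Jₖ = ψ†αₖψ` satisfy `∂ₜρ + ∑ₖ ∂ₖJₖ = 0`, since the
real potential multiplies the Hermitian matrix `β` and drops out, and `|Jₖ| ≤ ρ`, since `αₖ` is a
Hermitian involution. Hence `d/dt ∫ w ρ = ∫ (ρ ∂ₜw + ∑ₖ Jₖ ∂ₖw)`. For the weight
`w = ∑ⱼ tanh ((xⱼ - (1+b)t)/λ)` the integrand is `λ⁻¹ ∑ⱼ sech² (⋯) (Jⱼ - (1+b)ρ)`, and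
`Jⱼ - (1+b)ρ ≤ -bρ`.

The delicate point is the differentiation under the integral sign, because the spatial decay of `ψ`
is not assumed locally uniform in time. Cutoffs that move inwards faster than the current
propagates show that the total charge cannot increase; being bounded, it changes only at rate
`O(1/R)` inside a static cutoff at radius `R`, so it is conserved. The charge outside radius `R` is
then small uniformly for nearby times, so that the derivatives of the truncated integrals converge
locally uniformly.
-/

open scoped Topology

section SpatiallyCompact

variable {E : Type*} [NormedAddCommGroup E]

/-- A function on spacetime whose spatial support is compact, locally uniformly in time. -/
def SpatiallyCompact (w : ℝ × E → ℝ) : Prop :=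
  ∀ t, ∀ᶠ p in 𝓝 t ×ˢ cocompact E, w p = 0

variable {w : ℝ × E → ℝ}

lemma SpatiallyCompact.mul_right (hw : SpatiallyCompact w) (f : ℝ × E → ℝ) :
    SpatiallyCompact (w * f) := fun t =>
  (hw t).mono fun p hp => by rw [Pi.mul_apply, hp, zero_mul]

lemma SpatiallyCompact.exists_isCompact (hw : SpatiallyCompact w) (t : ℝ) :
    ∃ K : Set E, IsCompact K ∧ ∀ᶠ s in 𝓝 t, ∀ x ∉ K, w (s, x) = 0 := by
  obtain ⟨P, hP, Q, hQ, hPQ⟩ := eventually_prod_iff.1 (hw t)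
  obtain ⟨K, hK, hKQ⟩ := mem_cocompact.1 hQ
  exact ⟨K, hK, hP.mono fun s hs x hx => hPQ hs (hKQ hx)⟩

lemma SpatiallyCompact.integrable [MeasurableSpace E] [BorelSpace E] {μ : Measure E}
    [IsFiniteMeasureOnCompacts μ] (hw : SpatiallyCompact w)
    (hwc : Continuous w) (t : ℝ) : Integrable (fun x => w (t, x)) μ := by
  obtain ⟨K, hK, hKw⟩ := hw.exists_isCompact t
  exact (hwc.comp (.prodMk_right t)).integrable_of_hasCompactSupport
    (.intro hK hKw.self_of_nhds)

variable [NormedSpace ℝ E]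

lemma eventually_fderiv_eq_zero_of_notMem {K : Set E} (hK : IsClosed K) {t : ℝ}
    (hw : ∀ᶠ s in 𝓝 t, ∀ x ∉ K, w (s, x) = 0) :
    ∀ᶠ s in 𝓝 t, ∀ x ∉ K, fderiv ℝ w (s, x) = 0 := by
  filter_upwards [hw.eventually_nhds] with s hs x hx
  have hzero : w =ᶠ[𝓝 (s, x)] fun _ => 0 := by
    filter_upwards [hs.prod_nhds (hK.isOpen_compl.mem_nhds hx)] with p hp using hp.1 _ hp.2
  rw [hzero.fderiv_eq, fderiv_fun_const, Pi.zero_apply]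

lemma SpatiallyCompact.fderiv_apply (hw : SpatiallyCompact w) (u : ℝ × E) :
    SpatiallyCompact fun p => fderiv ℝ w p u := by
  intro t
  obtain ⟨K, hK, hKw⟩ := hw.exists_isCompact t
  filter_upwards [(eventually_fderiv_eq_zero_of_notMem hK.isClosed hKw).prod_mk
    hK.compl_mem_cocompact] with p hp
  rw [hp.1 _ hp.2, _root_.zero_apply]

lemma continuous_fderiv_apply_const (hw : ContDiff ℝ 1 w) (u : ℝ × E) :
    Continuous fun p => fderiv ℝ w p u :=
  (hw.continuous_fderiv one_ne_zero).clm_apply continuous_const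

lemma fderiv_comp_prodMk_right {F : Type*} [NormedAddCommGroup F] [NormedSpace ℝ F]
    {f : ℝ × E → F} {t : ℝ} {x : E} (hf : DifferentiableAt ℝ f (t, x)) (v : E) :
    fderiv ℝ (fun y => f (t, y)) x v = fderiv ℝ f (t, x) (0, v) := by
  have := hf.hasFDerivAt.comp x (hasFDerivAt_prodMk_right t x)
  rw [show (fun y => f (t, y)) = f ∘ Prod.mk t from rfl, this.fderiv]
  simp

variable [MeasurableSpace E] [BorelSpace E] {μ : Measure E}

lemma SpatiallyCompact.hasDerivAt_integral [IsFiniteMeasureOnCompacts μ]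
    (hw : SpatiallyCompact w) (hw1 : ContDiff ℝ 1 w) (t : ℝ) :
    HasDerivAt (fun s => ∫ x, w (s, x) ∂μ) (∫ x, fderiv ℝ w (t, x) (1, 0) ∂μ) t := by
  obtain ⟨K, hK, hKw⟩ := hw.exists_isCompact t
  have hKw' := (eventually_fderiv_eq_zero_of_notMem hK.isClosed hKw).self_of_nhds
  have hdt := continuous_fderiv_apply_const hw1 (1, 0)
  obtain ⟨C, hC⟩ := ((isCompact_closedBall t 1).prod hK).exists_bound_of_continuousOn
    hdt.continuousOn
  have : Fact (μ K < ⊤) := ⟨hK.measure_lt_top⟩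
  have hderiv := (hasDerivAt_integral_of_dominated_loc_of_deriv_le (μ := μ.restrict K)
    (F := fun s x => w (s, x)) (F' := fun s x => fderiv ℝ w (s, x) (1, 0))
    (bound := fun _ => C) (Metric.ball_mem_nhds t one_pos)
    (.of_forall fun s => (hw1.continuous.comp (.prodMk_right s)).aestronglyMeasurable)
    (hw.integrable hw1.continuous t).restrict
    (hdt.comp (.prodMk_right t)).aestronglyMeasurable
    ((ae_restrict_mem hK.measurableSet).mono fun x hx s hs =>
      hC (s, x) ⟨Metric.ball_subset_closedBall hs, hx⟩)
    (integrable_const C)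
    (.of_forall fun x s _ => (hw1.differentiable one_ne_zero (s, x)).hasFDerivAt.comp_hasDerivAt s
      ((hasDerivAt_id s).prodMk (hasDerivAt_const s x)))).2
  rw [setIntegral_eq_integral_of_forall_compl_eq_zero fun x hx => by
    rw [hKw' x hx, _root_.zero_apply]] at hderiv
  refine hderiv.congr_of_eventuallyEq ?_
  filter_upwards [hKw] with s hs
  exact (setIntegral_eq_integral_of_forall_compl_eq_zero hs).symm

lemma SpatiallyCompact.integral_fderiv_space_eq_zero [FiniteDimensional ℝ E] [μ.IsAddHaarMeasure]
    (hw : SpatiallyCompact w) (hw1 : ContDiff ℝ 1 w) (t : ℝ) (v : E) :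
    ∫ x, fderiv ℝ w (t, x) (0, v) ∂μ = 0 := by
  have hd := hw1.differentiable one_ne_zero
  have hslice : Differentiable ℝ fun x => w (t, x) := by fun_prop
  have hdv := continuous_fderiv_apply_const hw1 (0, v)
  have hibp := integral_mul_fderiv_eq_neg_fderiv_mul_of_integrable (μ := μ) (v := v)
    (f := fun _ => (1 : ℝ)) (g := fun x => w (t, x)) (by simp)
    (by simpa [fderiv_comp_prodMk_right (hd _)] using (hw.fderiv_apply (0, v)).integrable hdv t)
    (by simpa using hw.integrable hw1.continuous t) (by fun_prop) (fun x _ => hslice x)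
  simpa [fderiv_comp_prodMk_right (hd _)] using hibp

end SpatiallyCompact

section ConservedCurrent

variable {E ι : Type*} [NormedAddCommGroup E] [Fintype ι]

/-- The constant bounding a spacetime current in terms of its density: its component along
`(1, 0)` and those along each `(0, v k)` are at most the density. -/
noncomputable def currentBound (v : ι → E) : ℝ := 1 + ∑ k, ‖v k‖

lemma currentBound_pos (v : ι → E) : 0 < currentBound v := by
  unfold currentBound
  positivity

variable [NormedSpace ℝ E]

/-- A `C¹` solution of the conservation law `∂ₜρ + ∑ₖ ∂_{v k} Jₖ = 0` whose density `ρ` dominates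
each of its fluxes `Jₖ`, so that it propagates with finite speed. -/
structure IsConservedCurrent (v : ι → E) (ρ : ℝ × E → ℝ) (J : ι → ℝ × E → ℝ) : Prop where
  contDiff_density : ContDiff ℝ 1 ρ
  contDiff_flux (k : ι) : ContDiff ℝ 1 (J k)
  continuity_eq (p : ℝ × E) : fderiv ℝ ρ p (1, 0) + ∑ k, fderiv ℝ (J k) p (0, v k) = 0
  density_nonneg (p : ℝ × E) : 0 ≤ ρ p
  abs_flux_le (k : ι) (p : ℝ × E) : |J k p| ≤ ρ p

/-- The derivative `ρ ∂ₜw + ∑ₖ Jₖ ∂_{v k} w` of `w` along the current `(ρ, J)`; for a conserved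
current its integral is the rate of change of `∫ w ρ`. -/
noncomputable def derivAlongCurrent (v : ι → E) (ρ : ℝ × E → ℝ) (J : ι → ℝ × E → ℝ)
    (w : ℝ × E → ℝ) (p : ℝ × E) : ℝ :=
  fderiv ℝ w p (1, 0) * ρ p + ∑ k, fderiv ℝ w p (0, v k) * J k p

variable {v : ι → E} {ρ : ℝ × E → ℝ} {J : ι → ℝ × E → ℝ} {w w₁ w₂ : ℝ × E → ℝ}

lemma derivAlongCurrent_mul (hw₁ : Differentiable ℝ w₁) (hw₂ : Differentiable ℝ w₂)
    (p : ℝ × E) : derivAlongCurrent v ρ J (w₁ * w₂) p =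
      w₁ p * derivAlongCurrent v ρ J w₂ p + w₂ p * derivAlongCurrent v ρ J w₁ p := by
  simp only [derivAlongCurrent, fderiv_mul (hw₁ p) (hw₂ p), _root_.add_apply, _root_.smul_apply,
    smul_eq_mul, add_mul, mul_add, Finset.sum_add_distrib, Finset.mul_sum, mul_assoc]
  ring

lemma derivAlongCurrent_add_const_mul_fst (hw : Differentiable ℝ w) (c : ℝ) (p : ℝ × E) :
    derivAlongCurrent v ρ J (fun q => w q + c * q.1) p =
      derivAlongCurrent v ρ J w p + c * ρ p := by
  have hfderiv : HasFDerivAt (fun q : ℝ × E => w q + c * q.1)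
      (fderiv ℝ w p + c • ContinuousLinearMap.fst ℝ ℝ E) p :=
    (hw p).hasFDerivAt.add (hasFDerivAt_fst.const_mul c)
  simp only [derivAlongCurrent, hfderiv.fderiv, _root_.add_apply, _root_.smul_apply,
    ContinuousLinearMap.coe_fst', smul_eq_mul, mul_one, mul_zero, add_zero]
  ring

namespace IsConservedCurrent

variable (h : IsConservedCurrent v ρ J)
include h

lemma continuous_derivAlongCurrent (hw : ContDiff ℝ 1 w) :
    Continuous (derivAlongCurrent v ρ J w) :=
  ((continuous_fderiv_apply_const hw _).mul h.contDiff_density.continuous).add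
    (continuous_finsetSum _ fun k _ =>
      (continuous_fderiv_apply_const hw _).mul (h.contDiff_flux k).continuous)

lemma abs_sum_mul_flux_le (a : ι → ℝ) (p : ℝ × E) :
    |∑ k, a k * J k p| ≤ (∑ k, |a k|) * ρ p := by
  rw [Finset.sum_mul]
  refine (Finset.abs_sum_le_sum_abs _ _).trans (Finset.sum_le_sum fun k _ => ?_)
  rw [abs_mul]
  exact mul_le_mul_of_nonneg_left (h.abs_flux_le k p) (abs_nonneg _)

lemma abs_derivAlongCurrent_le {p : ℝ × E} {C : ℝ} (hC : ‖fderiv ℝ w p‖ ≤ C) :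
    |derivAlongCurrent v ρ J w p| ≤ C * currentBound v * ρ p := by
  have hρ := h.density_nonneg p
  have htime : |fderiv ℝ w p (1, 0)| ≤ C := by
    simpa using (fderiv ℝ w p).le_of_opNorm_le hC (1, 0)
  have hspace (k : ι) : |fderiv ℝ w p (0, v k)| ≤ C * ‖v k‖ := by
    simpa using (fderiv ℝ w p).le_of_opNorm_le hC (0, v k)
  calc |derivAlongCurrent v ρ J w p|
    _ ≤ |fderiv ℝ w p (1, 0)| * ρ p + (∑ k, |fderiv ℝ w p (0, v k)|) * ρ p := by
      refine (abs_add_le _ _).trans (add_le_add ?_ (h.abs_sum_mul_flux_le _ p))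
      rw [abs_mul, abs_of_nonneg hρ]
    _ ≤ C * ρ p + (∑ k, C * ‖v k‖) * ρ p := by
      gcongr with k
      exact hspace k
    _ = C * currentBound v * ρ p := by
      rw [← Finset.mul_sum, currentBound]
      ring

lemma fderiv_mul_density (hw : Differentiable ℝ w) (p : ℝ × E) :
    fderiv ℝ (w * ρ) p (1, 0) =
      derivAlongCurrent v ρ J w p - ∑ k, fderiv ℝ (w * J k) p (0, v k) := by
  have hJ (k : ι) : DifferentiableAt ℝ (J k) p :=
    (h.contDiff_flux k).differentiable one_ne_zero p
  have hρ : DifferentiableAt ℝ ρ p := h.contDiff_density.differentiable one_ne_zero p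
  simp only [derivAlongCurrent, fderiv_mul (hw p) (hJ _), fderiv_mul (hw p) hρ, _root_.add_apply,
    _root_.smul_apply, smul_eq_mul, Finset.sum_add_distrib, ← Finset.mul_sum]
  rw [eq_neg_of_add_eq_zero_left (h.continuity_eq p)]
  simp only [mul_comm (J _ p)]
  ring

variable [MeasurableSpace E] [BorelSpace E] {μ : Measure E}

lemma integrable_flux {t : ℝ} (hρ : Integrable (fun x => ρ (t, x)) μ) (k : ι) :
    Integrable (fun x => J k (t, x)) μ :=
  hρ.mono' ((h.contDiff_flux k).continuous.comp (.prodMk_right t)).aestronglyMeasurable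
    (.of_forall fun x => h.abs_flux_le k (t, x))

lemma integrable_derivAlongCurrent {t : ℝ} (hρ : Integrable (fun x => ρ (t, x)) μ)
    (hw : ContDiff ℝ 1 w) {C : ℝ} (hC : ∀ x, ‖fderiv ℝ w (t, x)‖ ≤ C) :
    Integrable (fun x => derivAlongCurrent v ρ J w (t, x)) μ := by
  exact (hρ.const_mul (C * currentBound v)).mono'
    ((h.continuous_derivAlongCurrent hw).comp (.prodMk_right t)).aestronglyMeasurable
    (.of_forall fun x => h.abs_derivAlongCurrent_le (hC x))

lemma hasDerivAt_integral_mul_of_spatiallyCompact [FiniteDimensional ℝ E]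
    [μ.IsAddHaarMeasure] (hw : SpatiallyCompact w) (hw1 : ContDiff ℝ 1 w) (t : ℝ) :
    HasDerivAt (fun s => ∫ x, w (s, x) * ρ (s, x) ∂μ)
      (∫ x, derivAlongCurrent v ρ J w (t, x) ∂μ) t := by
  have hwρ : ContDiff ℝ 1 (w * ρ) := hw1.mul h.contDiff_density
  have hwJ (k : ι) : ContDiff ℝ 1 (w * J k) := hw1.mul (h.contDiff_flux k)
  have hint_ρ : Integrable (fun x => fderiv ℝ (w * ρ) (t, x) (1, 0)) μ :=
    ((hw.mul_right ρ).fderiv_apply _).integrable (continuous_fderiv_apply_const hwρ _) t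
  have hint_J (k : ι) : Integrable (fun x => fderiv ℝ (w * J k) (t, x) (0, v k)) μ :=
    ((hw.mul_right (J k)).fderiv_apply _).integrable (continuous_fderiv_apply_const (hwJ k) _) t
  refine ((hw.mul_right ρ).hasDerivAt_integral hwρ t).congr_deriv ?_
  have hsplit (x : E) : derivAlongCurrent v ρ J w (t, x) =
      fderiv ℝ (w * ρ) (t, x) (1, 0) + ∑ k, fderiv ℝ (w * J k) (t, x) (0, v k) := by
    rw [h.fderiv_mul_density (hw1.differentiable one_ne_zero), sub_add_cancel]
  simp_rw [hsplit]
  rw [integral_add hint_ρ (integrable_finsetSum _ fun k _ => hint_J k),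
    integral_finsetSum _ fun k _ => hint_J k, Finset.sum_eq_zero fun k _ =>
      (hw.mul_right (J k)).integral_fderiv_space_eq_zero (hwJ k) t (v k), add_zero]

end IsConservedCurrent

end ConservedCurrent

section Cutoff

/-- The smooth cutoff equal to `1` where `φ ≤ R` and to `0` where `φ ≥ 2 R`, for `R > 0`. -/
noncomputable def cutoff {X : Type*} (φ : X → ℝ) (R : ℝ) (p : X) : ℝ :=
  Real.smoothTransition (2 - φ p / R)

lemma cutoff_nonneg {X : Type*} (φ : X → ℝ) (R : ℝ) (p : X) : 0 ≤ cutoff φ R p :=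
  Real.smoothTransition.nonneg _

lemma cutoff_le_one {X : Type*} (φ : X → ℝ) (R : ℝ) (p : X) : cutoff φ R p ≤ 1 :=
  Real.smoothTransition.le_one _

lemma eventually_cutoff_eq_one {X : Type*} (φ : X → ℝ) (p : X) :
    ∀ᶠ R in atTop, cutoff φ R p = 1 := by
  filter_upwards [eventually_gt_atTop 0, eventually_ge_atTop (φ p)] with R hR hφR
  refine Real.smoothTransition.one_of_one_le ?_
  linarith [(div_le_one hR).2 hφR]

variable {E : Type*} [NormedAddCommGroup E]

/-- A function on spacetime tending to infinity at spatial infinity, locally uniformly in time. -/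
def SpatiallyProper (φ : ℝ × E → ℝ) : Prop :=
  ∀ t, Tendsto φ (𝓝 t ×ˢ cocompact E) atTop

variable {φ : ℝ × E → ℝ} {R : ℝ}

lemma SpatiallyProper.add_const_mul_fst (hφ : SpatiallyProper φ) (c : ℝ) :
    SpatiallyProper fun p => φ p + c * p.1 := fun t =>
  (hφ t).atTop_add (tendsto_fst.const_mul c)

lemma SpatiallyProper.spatiallyCompact_cutoff (hφ : SpatiallyProper φ) (hR : 0 < R) :
    SpatiallyCompact (cutoff φ R) := fun t => by
  filter_upwards [(hφ t).eventually_ge_atTop (2 * R)] with p hp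
  exact Real.smoothTransition.zero_of_nonpos (sub_nonpos.2 ((le_div_iff₀ hR).2 hp))

lemma deriv_smoothTransition_nonneg (r : ℝ) : 0 ≤ deriv Real.smoothTransition r :=
  Real.smoothTransition.monotone.deriv_nonneg

lemma exists_abs_deriv_smoothTransition_le : ∃ C, ∀ r, |deriv Real.smoothTransition r| ≤ C := by
  refine (Real.smoothTransition.contDiff (n := 1).continuous_deriv
    le_rfl).bounded_above_of_compact_support (.intro (isCompact_Icc (a := 0) (b := 1)) ?_)
  intro r hr
  rw [Set.mem_Icc, not_and_or, not_le, not_le] at hr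
  obtain hr | hr := hr
  · have : Real.smoothTransition =ᶠ[𝓝 r] fun _ => 0 := by
      filter_upwards [Iio_mem_nhds hr] with y hy
        using Real.smoothTransition.zero_of_nonpos (le_of_lt hy)
    rw [this.deriv_eq, deriv_const]
  · have : Real.smoothTransition =ᶠ[𝓝 r] fun _ => 1 := by
      filter_upwards [Ioi_mem_nhds hr] with y hy
        using Real.smoothTransition.one_of_one_le (le_of_lt hy)
    rw [this.deriv_eq, deriv_const]

lemma tendsto_integral_cutoff_mul [MeasurableSpace E] [OpensMeasurableSpace E] {μ : Measure E}
    (hφ : Continuous φ) {u : E → ℝ} (hu : Integrable u μ) (t : ℝ) :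
    Tendsto (fun R => ∫ x, cutoff φ R (t, x) * u x ∂μ) atTop (𝓝 (∫ x, u x ∂μ)) := by
  refine tendsto_integral_filter_of_dominated_convergence (fun x => ‖u x‖)
    (.of_forall fun R => ?_) (.of_forall fun R => .of_forall fun x => ?_) hu.norm
    (.of_forall fun x => ?_)
  · have : Continuous fun x => cutoff φ R (t, x) :=
      Real.smoothTransition.continuous.comp (by fun_prop)
    exact this.aestronglyMeasurable.mul hu.aestronglyMeasurable
  · rw [norm_mul, Real.norm_of_nonneg (cutoff_nonneg _ _ _)]
    exact mul_le_of_le_one_left (norm_nonneg _) (cutoff_le_one _ _ _)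
  · refine tendsto_const_nhds.congr' ?_
    filter_upwards [eventually_cutoff_eq_one φ (t, x)] with R hR
    rw [hR, one_mul]

variable [NormedSpace ℝ E]

lemma contDiff_cutoff (hφ : ContDiff ℝ 1 φ) (R : ℝ) : ContDiff ℝ 1 (cutoff φ R) :=
  Real.smoothTransition.contDiff.comp (contDiff_const.sub (hφ.div_const R))

lemma fderiv_cutoff (hφ : Differentiable ℝ φ) (R : ℝ) (p : ℝ × E) :
    fderiv ℝ (cutoff φ R) p =
      -(deriv Real.smoothTransition (2 - φ p / R) / R) • fderiv ℝ φ p := by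
  have htrans : HasDerivAt Real.smoothTransition _ (2 - φ p / R) :=
    (Real.smoothTransition.contDiff.differentiable one_ne_zero _).hasDerivAt
  have hphase : HasFDerivAt (fun q => 2 - φ q / R) (-(R⁻¹ • fderiv ℝ φ p)) p := by
    simpa only [div_eq_mul_inv] using ((hφ p).hasFDerivAt.mul_const R⁻¹).const_sub 2
  refine (htrans.comp_hasFDerivAt p hphase).fderiv.trans ?_
  rw [smul_neg, smul_smul, ← neg_smul, ← div_eq_mul_inv]

lemma exists_norm_fderiv_cutoff_le (hφ : Differentiable ℝ φ) {L : ℝ}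
    (hL : ∀ p, ‖fderiv ℝ φ p‖ ≤ L) :
    ∃ D, ∀ R, 0 < R → ∀ p, ‖fderiv ℝ (cutoff φ R) p‖ ≤ D / R := by
  obtain ⟨C, hC⟩ := exists_abs_deriv_smoothTransition_le
  refine ⟨C * L, fun R hR p => ?_⟩
  rw [fderiv_cutoff hφ, norm_smul, norm_neg, norm_div, Real.norm_of_nonneg hR.le,
    div_mul_eq_mul_div]
  have hC0 : 0 ≤ C := (abs_nonneg _).trans (hC 0)
  gcongr
  exacts [hC _, hL p]

lemma derivAlongCurrent_cutoff {ι : Type*} [Fintype ι] (v : ι → E) (ρ : ℝ × E → ℝ)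
    (J : ι → ℝ × E → ℝ) (hφ : Differentiable ℝ φ) (R : ℝ) (p : ℝ × E) :
    derivAlongCurrent v ρ J (cutoff φ R) p =
      -(deriv Real.smoothTransition (2 - φ p / R) / R) * derivAlongCurrent v ρ J φ p := by
  simp only [derivAlongCurrent, fderiv_cutoff hφ, _root_.smul_apply, smul_eq_mul, mul_add,
    Finset.mul_sum, mul_assoc]

lemma exists_spatiallyProper_bounded_fderiv (E : Type*) [NormedAddCommGroup E] [NormedSpace ℝ E]
    [FiniteDimensional ℝ E] :
    ∃ φ : ℝ × E → ℝ, ContDiff ℝ 1 φ ∧ SpatiallyProper φ ∧ ∃ L, ∀ p, ‖fderiv ℝ φ p‖ ≤ L := by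
  let e := toEuclidean (E := E)
  let F := EuclideanSpace ℝ (Fin (Module.finrank ℝ E))
  let ν (p : ℝ × E) : WithLp 2 (ℝ × F) := WithLp.toLp 2 (1, e p.2)
  have hν_ne (p : ℝ × E) : ν p ≠ 0 := fun h0 =>
    one_ne_zero (congrArg (fun z => (WithLp.ofLp z).1) h0)
  have hν : ContDiff ℝ 1 ν :=
    (WithLp.prodContinuousLinearEquiv 2 ℝ ℝ F).symm.contDiff.comp
      (contDiff_const.prodMk (e.contDiff.comp contDiff_snd))
  have hν_lip : ∃ L, LipschitzWith L ν :=
    ⟨_, (WithLp.prod_lipschitzWith_toLp 2 ℝ F).comp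
      ((LipschitzWith.const 1).prodMk (e.lipschitz.comp LipschitzWith.prod_snd))⟩
  obtain ⟨L, hL⟩ := hν_lip
  refine ⟨fun p => ‖ν p‖, hν.norm ℝ hν_ne, fun t => ?_, _, fun p =>
    norm_fderiv_le_of_lipschitz ℝ (lipschitzWith_one_norm.comp hL)⟩
  have he : Tendsto (fun p : ℝ × E => ‖e p.2‖) (𝓝 t ×ˢ cocompact E) atTop :=
    tendsto_norm_cocompact_atTop.comp
      (e.toHomeomorph.isClosedEmbedding.tendsto_cocompact.comp tendsto_snd)
  exact tendsto_atTop_mono (fun p => WithLp.norm_snd_le (p := 2) (x := ν p)) he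

end Cutoff

section Conservation

variable {E ι : Type*} [NormedAddCommGroup E] [NormedSpace ℝ E] [Fintype ι]
  {v : ι → E} {ρ : ℝ × E → ℝ} {J : ι → ℝ × E → ℝ} {φ w : ℝ × E → ℝ}

namespace IsConservedCurrent

variable (h : IsConservedCurrent v ρ J)
include h

lemma abs_derivAlongCurrent_cutoff_mul_sub_le {C D R : ℝ} {p : ℝ × E}
    (hφ : ContDiff ℝ 1 φ) (hD : ‖fderiv ℝ (cutoff φ R) p‖ ≤ D) (hw : Differentiable ℝ w)
    (hC : |w p| ≤ C) (hC' : ‖fderiv ℝ w p‖ ≤ C) :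
    |derivAlongCurrent v ρ J (cutoff φ R * w) p - derivAlongCurrent v ρ J w p| ≤
      C * currentBound v * ((1 + D) * ρ p - cutoff φ R p * ρ p) := by
  rw [derivAlongCurrent_mul ((contDiff_cutoff hφ R).differentiable one_ne_zero) hw]
  set a := cutoff φ R p
  have ha : 0 ≤ 1 - a := sub_nonneg.2 (cutoff_le_one φ R p)
  calc |a * derivAlongCurrent v ρ J w p + w p * derivAlongCurrent v ρ J (cutoff φ R) p -
        derivAlongCurrent v ρ J w p|
    _ = |w p * derivAlongCurrent v ρ J (cutoff φ R) p -
        (1 - a) * derivAlongCurrent v ρ J w p| := by ring_nf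
    _ ≤ C * (D * currentBound v * ρ p) + (1 - a) * (C * currentBound v * ρ p) := by
      refine (abs_sub _ _).trans (add_le_add ?_ ?_) <;> rw [abs_mul]
      · exact mul_le_mul hC (h.abs_derivAlongCurrent_le hD) (abs_nonneg _)
          ((abs_nonneg _).trans hC)
      · rw [abs_of_nonneg ha]
        exact mul_le_mul_of_nonneg_left (h.abs_derivAlongCurrent_le hC') ha
    _ = C * currentBound v * ((1 + D) * ρ p - a * ρ p) := by ring

variable [MeasurableSpace E] {μ : Measure E}

lemma abs_integral_derivAlongCurrent_le {t : ℝ} (hρ : Integrable (fun x => ρ (t, x)) μ) {C : ℝ}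
    (hC : ∀ x, ‖fderiv ℝ w (t, x)‖ ≤ C) :
    |∫ x, derivAlongCurrent v ρ J w (t, x) ∂μ| ≤ C * currentBound v * ∫ x, ρ (t, x) ∂μ := by
  rw [← integral_const_mul, ← Real.norm_eq_abs]
  exact norm_integral_le_of_norm_le (hρ.const_mul _) (.of_forall fun x =>
    h.abs_derivAlongCurrent_le (hC x))

lemma abs_integral_derivAlongCurrent_cutoff_mul_sub_le [BorelSpace E] {t C D R : ℝ}
    (hρ : Integrable (fun x => ρ (t, x)) μ) (hφ : ContDiff ℝ 1 φ)
    (hD : ∀ p, ‖fderiv ℝ (cutoff φ R) p‖ ≤ D)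
    (hw : ContDiff ℝ 1 w) (hC : ∀ p, |w p| ≤ C) (hC' : ∀ p, ‖fderiv ℝ w p‖ ≤ C) :
    |∫ x, derivAlongCurrent v ρ J (cutoff φ R * w) (t, x) ∂μ -
        ∫ x, derivAlongCurrent v ρ J w (t, x) ∂μ| ≤
      C * currentBound v *
        ((1 + D) * ∫ x, ρ (t, x) ∂μ - ∫ x, cutoff φ R (t, x) * ρ (t, x) ∂μ) := by
  have hcut := contDiff_cutoff hφ R
  have hint_cut : Integrable (fun x => cutoff φ R (t, x) * ρ (t, x)) μ :=
    hρ.bdd_mul (hcut.continuous.comp (.prodMk_right t)).aestronglyMeasurable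
      (.of_forall fun x => (Real.norm_of_nonneg (cutoff_nonneg φ R (t, x))).trans_le
        (cutoff_le_one φ R (t, x)))
  have hfderiv (p : ℝ × E) : ‖fderiv ℝ (cutoff φ R * w) p‖ ≤ C + C * D := by
    rw [fderiv_mul (hcut.differentiable one_ne_zero p) (hw.differentiable one_ne_zero p)]
    refine (norm_add_le _ _).trans (add_le_add ?_ ?_) <;> rw [norm_smul]
    · rw [Real.norm_of_nonneg (cutoff_nonneg φ R p)]
      exact (mul_le_of_le_one_left (norm_nonneg _) (cutoff_le_one φ R p)).trans (hC' p)
    · exact mul_le_mul (hC p) (hD p) (norm_nonneg _) ((abs_nonneg _).trans (hC p))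
  have hint_prod : Integrable (fun x => derivAlongCurrent v ρ J (cutoff φ R * w) (t, x)) μ :=
    h.integrable_derivAlongCurrent hρ (hcut.mul hw) fun x => hfderiv _
  rw [← integral_const_mul, ← integral_sub (hρ.const_mul _) hint_cut, ← integral_const_mul,
    ← integral_sub hint_prod (h.integrable_derivAlongCurrent hρ hw fun x => hC' _),
    ← Real.norm_eq_abs]
  exact norm_integral_le_of_norm_le (((hρ.const_mul _).sub hint_cut).const_mul _)
    (.of_forall fun x => h.abs_derivAlongCurrent_cutoff_mul_sub_le hφ (hD _)
      (hw.differentiable one_ne_zero) (hC _) (hC' _))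

variable [BorelSpace E] [FiniteDimensional ℝ E] [μ.IsAddHaarMeasure]
  (hρ : ∀ s, Integrable (fun x => ρ (s, x)) μ)
include hρ

lemma antitone_integral_density_of_derivAlongCurrent_nonneg (hφ : ContDiff ℝ 1 φ)
    (hφ_proper : SpatiallyProper φ) (hφ_nonneg : ∀ p, 0 ≤ derivAlongCurrent v ρ J φ p) :
    Antitone fun s => ∫ x, ρ (s, x) ∂μ := by
  have hcutoff {R : ℝ} (hR : 0 < R) :
      Antitone fun s => ∫ x, cutoff φ R (s, x) * ρ (s, x) ∂μ := by
    refine antitone_of_hasDerivAt_nonpos (h.hasDerivAt_integral_mul_of_spatiallyCompact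
      (hφ_proper.spatiallyCompact_cutoff hR) (contDiff_cutoff hφ R))
      fun s => integral_nonpos fun x => ?_
    rw [derivAlongCurrent_cutoff v ρ J (hφ.differentiable one_ne_zero), neg_mul]
    exact neg_nonpos.2
      (mul_nonneg (div_nonneg (deriv_smoothTransition_nonneg _) hR.le) (hφ_nonneg _))
  intro s t hst
  refine le_of_tendsto_of_tendsto (tendsto_integral_cutoff_mul hφ.continuous (hρ t) t)
    (tendsto_integral_cutoff_mul hφ.continuous (hρ s) s) ?_
  filter_upwards [eventually_gt_atTop 0] with R hR using hcutoff hR hst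

lemma abs_integral_cutoff_mul_sub_le {R D M : ℝ} (hR : 0 < R) (hφ : ContDiff ℝ 1 φ)
    (hφ_proper : SpatiallyProper φ) (hD : ∀ p, ‖fderiv ℝ (cutoff φ R) p‖ ≤ D) {s t : ℝ}
    (hM : ∀ τ ∈ Set.uIcc s t, ∫ x, ρ (τ, x) ∂μ ≤ M) :
    |∫ x, cutoff φ R (t, x) * ρ (t, x) ∂μ - ∫ x, cutoff φ R (s, x) * ρ (s, x) ∂μ| ≤
      D * currentBound v * M * |t - s| := by
  have hD0 : 0 ≤ D := (norm_nonneg _).trans (hD 0)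
  have hcb := (currentBound_pos v).le
  refine (convex_uIcc s t).norm_image_sub_le_of_norm_hasDerivWithin_le
    (fun τ _ => (h.hasDerivAt_integral_mul_of_spatiallyCompact
      (hφ_proper.spatiallyCompact_cutoff hR) (contDiff_cutoff hφ R) τ).hasDerivWithinAt)
    (fun τ hτ => ?_) Set.left_mem_uIcc Set.right_mem_uIcc
  refine (h.abs_integral_derivAlongCurrent_le (hρ τ) fun x => hD (τ, x)).trans ?_
  gcongr
  exact hM τ hτ

lemma antitone_integral_density : Antitone fun s => ∫ x, ρ (s, x) ∂μ := by
  obtain ⟨φ, hφ, hφ_proper, L, hL⟩ := exists_spatiallyProper_bounded_fderiv E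
  -- the cutoffs of this phase travel inwards faster than the current propagates
  refine h.antitone_integral_density_of_derivAlongCurrent_nonneg hρ
    (φ := fun p => φ p + L * currentBound v * p.1)
    (by fun_prop) (hφ_proper.add_const_mul_fst _) fun p => ?_
  rw [derivAlongCurrent_add_const_mul_fst (hφ.differentiable one_ne_zero)]
  linarith [neg_le_of_abs_le (h.abs_derivAlongCurrent_le (hL p))]

theorem integral_density_eq (s t : ℝ) : ∫ x, ρ (s, x) ∂μ = ∫ x, ρ (t, x) ∂μ := by
  wlog hst : s ≤ t generalizing s t
  · exact (this t s (le_of_not_ge hst)).symm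
  obtain ⟨φ, hφ, hφ_proper, L, hL⟩ := exists_spatiallyProper_bounded_fderiv E
  obtain ⟨D, hD⟩ := exists_norm_fderiv_cutoff_le (hφ.differentiable one_ne_zero) hL
  set M := ∫ x, ρ (s, x) ∂μ
  have hdrift : ∀ᶠ R in atTop,
      |∫ x, cutoff φ R (t, x) * ρ (t, x) ∂μ - ∫ x, cutoff φ R (s, x) * ρ (s, x) ∂μ| ≤
        D / R * (currentBound v * M * |t - s|) := by
    filter_upwards [eventually_gt_atTop 0] with R hR
    simp only [← mul_assoc]
    refine h.abs_integral_cutoff_mul_sub_le hρ hR hφ hφ_proper (hD R hR) fun τ hτ =>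
      h.antitone_integral_density hρ ?_
    rw [Set.uIcc_of_le hst] at hτ
    exact hτ.1
  have hbound : Tendsto (fun R => D / R * (currentBound v * M * |t - s|)) atTop (𝓝 0) := by
    simpa using (tendsto_id.const_div_atTop D).mul_const (currentBound v * M * |t - s|)
  have hcut (τ : ℝ) := tendsto_integral_cutoff_mul hφ.continuous (hρ τ) τ
  have hlim := le_of_tendsto_of_tendsto ((hcut t).sub (hcut s)).abs hbound hdrift
  exact (sub_eq_zero.1 (abs_nonpos_iff.1 hlim)).symm

lemma tendstoUniformlyOn_integral_derivAlongCurrent_cutoff_mul {C L : ℝ} (hφ : ContDiff ℝ 1 φ)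
    (hφ_proper : SpatiallyProper φ) (hL : ∀ p, ‖fderiv ℝ φ p‖ ≤ L)
    (hw : ContDiff ℝ 1 w) (hC : ∀ p, |w p| ≤ C) (hC' : ∀ p, ‖fderiv ℝ w p‖ ≤ C) (t : ℝ) :
    TendstoUniformlyOn (fun R s => ∫ x, derivAlongCurrent v ρ J (cutoff φ R * w) (s, x) ∂μ)
      (fun s => ∫ x, derivAlongCurrent v ρ J w (s, x) ∂μ) atTop (Metric.ball t 1) := by
  obtain ⟨D, hD⟩ := exists_norm_fderiv_cutoff_le (hφ.differentiable one_ne_zero) hL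
  set M := ∫ x, ρ (t, x) ∂μ with hM_def
  have hM (s : ℝ) : ∫ x, ρ (s, x) ∂μ = M := h.integral_density_eq hρ s t
  let tail (R : ℝ) : ℝ := C * currentBound v *
    ((1 + D / R) * M - (∫ x, cutoff φ R (t, x) * ρ (t, x) ∂μ - D / R * currentBound v * M))
  have htail : Tendsto tail atTop (𝓝 0) := by
    have hDR : Tendsto (fun R => D / R) atTop (𝓝 0) := tendsto_id.const_div_atTop D
    simpa [tail, hM_def] using ((hDR.const_add 1).mul_const M).sub
      ((tendsto_integral_cutoff_mul hφ.continuous (hρ t) t).sub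
        ((hDR.mul_const (currentBound v)).mul_const M)) |>.const_mul (C * currentBound v)
  refine Metric.tendstoUniformlyOn_iff.2 fun ε hε => ?_
  filter_upwards [eventually_gt_atTop 0, htail.eventually_lt_const hε] with R hR hRε s hs
  have hdrift : |∫ x, cutoff φ R (s, x) * ρ (s, x) ∂μ - ∫ x, cutoff φ R (t, x) * ρ (t, x) ∂μ| ≤
      D / R * currentBound v * M := by
    refine (h.abs_integral_cutoff_mul_sub_le hρ hR hφ hφ_proper (hD R hR)
      fun τ _ => (hM τ).le).trans (mul_le_of_le_one_right ?_ (Metric.mem_ball.1 hs).le)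
    have hD0 : 0 ≤ D / R := (norm_nonneg _).trans (hD R hR 0)
    have hcb := (currentBound_pos v).le
    have hM0 : 0 ≤ M := integral_nonneg fun x => h.density_nonneg _
    positivity
  have hCcb : 0 ≤ C * currentBound v :=
    mul_nonneg ((abs_nonneg _).trans (hC 0)) (currentBound_pos v).le
  calc dist (∫ x, derivAlongCurrent v ρ J w (s, x) ∂μ)
        (∫ x, derivAlongCurrent v ρ J (cutoff φ R * w) (s, x) ∂μ)
    _ ≤ C * currentBound v * ((1 + D / R) * M - ∫ x, cutoff φ R (s, x) * ρ (s, x) ∂μ) := by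
      rw [dist_comm, Real.dist_eq, ← hM s]
      exact h.abs_integral_derivAlongCurrent_cutoff_mul_sub_le (hρ s) hφ (hD R hR) hw hC hC'
    _ ≤ tail R := by
      refine mul_le_mul_of_nonneg_left ?_ hCcb
      linarith [neg_le_of_abs_le hdrift]
    _ < ε := hRε

theorem hasDerivAt_integral_mul {C : ℝ} (hw : ContDiff ℝ 1 w) (hC : ∀ p, |w p| ≤ C)
    (hC' : ∀ p, ‖fderiv ℝ w p‖ ≤ C) (t : ℝ) :
    HasDerivAt (fun s => ∫ x, w (s, x) * ρ (s, x) ∂μ)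
      (∫ x, derivAlongCurrent v ρ J w (t, x) ∂μ) t := by
  obtain ⟨φ, hφ, hφ_proper, L, hL⟩ := exists_spatiallyProper_bounded_fderiv E
  have htruncated {R : ℝ} (hR : 0 < R) (s : ℝ) :=
    h.hasDerivAt_integral_mul_of_spatiallyCompact (μ := μ)
      ((hφ_proper.spatiallyCompact_cutoff hR).mul_right w) ((contDiff_cutoff hφ R).mul hw) s
  refine hasDerivAt_of_tendstoUniformlyOn Metric.isOpen_ball
    (h.tendstoUniformlyOn_integral_derivAlongCurrent_cutoff_mul hρ hφ hφ_proper hL hw hC hC' t)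
    ((eventually_gt_atTop 0).mono fun R hR s _ => htruncated hR s) (fun s _ => ?_)
    (Metric.mem_ball_self one_pos)
  simp only [Pi.mul_apply, mul_assoc]
  exact tendsto_integral_cutoff_mul hφ.continuous ((hρ s).bdd_mul
    (hw.continuous.comp (.prodMk_right s)).aestronglyMeasurable (.of_forall fun x => hC _)) s

end IsConservedCurrent

end Conservation

section TravellingWeights

variable {ι κ : Type*} [Fintype ι] [Fintype κ]

lemma IsConservedCurrent.hasDerivAt_integral_sum_comp_linear_mul {E : Type*} [NormedAddCommGroup E]
    [NormedSpace ℝ E] [FiniteDimensional ℝ E] [MeasurableSpace E] [BorelSpace E] {μ : Measure E}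
    [μ.IsAddHaarMeasure] {v : ι → E} {ρ : ℝ × E → ℝ} {J : ι → ℝ × E → ℝ}
    (h : IsConservedCurrent v ρ J) (hρ : ∀ s, Integrable (fun x => ρ (s, x)) μ)
    {f f' : ℝ → ℝ} (hf : ∀ r, HasDerivAt f (f' r) r) (hf'_cont : Continuous f') {A A' : ℝ}
    (hA : ∀ r, |f r| ≤ A) (hA' : ∀ r, |f' r| ≤ A') (ℓ : κ → ℝ × E →L[ℝ] ℝ) (t : ℝ) :
    HasDerivAt (fun s => ∫ x, (∑ j, f (ℓ j (s, x))) * ρ (s, x) ∂μ)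
      (∫ x, ∑ j, f' (ℓ j (t, x)) *
        (ℓ j (1, 0) * ρ (t, x) + ∑ k, ℓ j (0, v k) * J k (t, x)) ∂μ) t := by
  have hfderiv (p : ℝ × E) :
      HasFDerivAt (fun p => ∑ j, f (ℓ j p)) (∑ j, f' (ℓ j p) • ℓ j) p :=
    .fun_sum fun j _ => (hf _).comp_hasFDerivAt p (ℓ j).hasFDerivAt
  have hcontDiff : ContDiff ℝ 1 fun p => ∑ j, f (ℓ j p) := by
    have hf1 : ContDiff ℝ 1 f := contDiff_one_iff_deriv.2
      ⟨fun r => (hf r).differentiableAt, by rwa [funext fun r => (hf r).deriv]⟩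
    exact .sum fun j _ => hf1.comp (ℓ j).contDiff
  have hbound (p : ℝ × E) : |∑ j, f (ℓ j p)| ≤ ∑ _j : κ, A :=
    (Finset.abs_sum_le_sum_abs _ _).trans (Finset.sum_le_sum fun j _ => hA _)
  have hbound' (p : ℝ × E) : ‖fderiv ℝ (fun p => ∑ j, f (ℓ j p)) p‖ ≤ ∑ j, A' * ‖ℓ j‖ := by
    rw [(hfderiv p).fderiv]
    refine norm_sum_le_of_le _ fun j _ => ?_
    rw [norm_smul]
    exact mul_le_mul_of_nonneg_right (hA' _) (norm_nonneg _)
  refine (h.hasDerivAt_integral_mul hρ hcontDiff (fun p => (hbound p).trans (le_max_left _ _))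
    (fun p => (hbound' p).trans (le_max_right _ _)) t).congr_deriv (integral_congr_ae ?_)
  refine .of_forall fun x => ?_
  simp only [derivAlongCurrent, (hfderiv _).fderiv, _root_.sum_apply, _root_.smul_apply,
    smul_eq_mul, mul_add, Finset.sum_add_distrib, Finset.sum_mul, Finset.mul_sum, mul_assoc]
  rw [Finset.sum_comm (s := Finset.univ (α := ι))]

variable [DecidableEq ι] {ρ : ℝ × (ι → ℝ) → ℝ} {J : ι → ℝ × (ι → ℝ) → ℝ} {f f' : ℝ → ℝ}
  {A A' : ℝ}

lemma IsConservedCurrent.hasDerivAt_integral_sum_comp_shift_mul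
    (h : IsConservedCurrent (fun k => Pi.single k 1) ρ J)
    (hρ : ∀ s, Integrable fun x => ρ (s, x)) (hf : ∀ r, HasDerivAt f (f' r) r)
    (hf'_cont : Continuous f') (hA : ∀ r, |f r| ≤ A) (hA' : ∀ r, |f' r| ≤ A') (lam c t : ℝ) :
    HasDerivAt (fun s => ∫ x, (∑ j, f ((x j - c * s) / lam)) * ρ (s, x))
      (∫ x, ∑ j, f' ((x j - c * t) / lam) * ((J j (t, x) - c * ρ (t, x)) / lam)) t := by
  let ℓ (j : ι) : ℝ × (ι → ℝ) →L[ℝ] ℝ :=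
    lam⁻¹ • (.proj j ∘L .snd ℝ ℝ (ι → ℝ) - c • .fst ℝ ℝ (ι → ℝ))
  have hℓ (j : ι) (s : ℝ) (x : ι → ℝ) : ℓ j (s, x) = (x j - c * s) / lam := by
    simp [ℓ, div_eq_inv_mul]
  have hflow (j : ι) (x : ι → ℝ) :
      ℓ j (1, 0) * ρ (t, x) + ∑ k, ℓ j (0, Pi.single k 1) * J k (t, x) =
        (J j (t, x) - c * ρ (t, x)) / lam := by
    simp only [hℓ, Pi.zero_apply, Pi.single_apply, mul_zero, sub_zero, ite_div, zero_div, ite_mul,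
      zero_mul, Finset.sum_ite_eq, Finset.mem_univ, if_true]
    ring
  have hderiv := h.hasDerivAt_integral_sum_comp_linear_mul hρ hf hf'_cont hA hA' ℓ t
  simp only [hflow] at hderiv
  simpa only [hℓ] using hderiv

lemma IsConservedCurrent.integral_sum_mul_flux_sub_le
    (h : IsConservedCurrent (fun k => Pi.single k 1) ρ J) {t : ℝ}
    (hρ : Integrable fun x => ρ (t, x)) {g : ι → (ι → ℝ) → ℝ} (hg : ∀ j, Continuous (g j))
    (hg_nonneg : ∀ j x, 0 ≤ g j x) (hA : ∀ j x, g j x ≤ A) {lam : ℝ} (hlam : 0 < lam) (b : ℝ) :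
    ∫ x, ∑ j, g j x * ((J j (t, x) - (1 + b) * ρ (t, x)) / lam) ≤
      -(b / lam) * ∑ j, ∫ x, g j x * ρ (t, x) := by
  have hint {u : (ι → ℝ) → ℝ} (hu : Integrable u) (j : ι) : Integrable fun x => g j x * u x :=
    hu.bdd_mul (hg j).aestronglyMeasurable
      (.of_forall fun x => (Real.norm_of_nonneg (hg_nonneg j x)).trans_le (hA j x))
  have hint_flow (j : ι) :
      Integrable fun x => g j x * ((J j (t, x) - (1 + b) * ρ (t, x)) / lam) :=
    hint (((h.integrable_flux hρ j).sub (hρ.const_mul _)).div_const _) j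
  rw [integral_finsetSum _ fun j _ => hint_flow j, Finset.mul_sum]
  refine Finset.sum_le_sum fun j _ => ?_
  rw [← integral_const_mul]
  refine integral_mono (hint_flow j) ((hint hρ j).const_mul _) fun x => ?_
  have hflux : J j (t, x) - (1 + b) * ρ (t, x) ≤ -b * ρ (t, x) := by
    linarith [le_of_abs_le (h.abs_flux_le j (t, x))]
  calc g j x * ((J j (t, x) - (1 + b) * ρ (t, x)) / lam)
    _ ≤ g j x * (-b * ρ (t, x) / lam) := by
      gcongr
      exact hg_nonneg j x
    _ = -(b / lam) * (g j x * ρ (t, x)) := by ring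

end TravellingWeights

section Dirac

variable {κ : Type*} [Fintype κ]

/-- The real bilinear form `Re ⟨u, A v⟩`; on the diagonal it is the expectation value of the
Hermitian matrix `A`. -/
noncomputable def reMatrixForm (A : Matrix κ κ ℂ) : (κ → ℂ) →L[ℝ] (κ → ℂ) →L[ℝ] ℝ :=
  (LinearMap.mk₂ ℝ (fun u v => (star u ⬝ᵥ A *ᵥ v).re)
    (fun u u' v => by simp [add_dotProduct]) (fun c u v => by simp [smul_dotProduct])
    (fun u v v' => by simp [mulVec_add, dotProduct_add])
    (fun c u v => by simp [mulVec_smul, dotProduct_smul])).toContinuousBilinearMap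

lemma reMatrixForm_apply (A : Matrix κ κ ℂ) (u v : κ → ℂ) :
    reMatrixForm A u v = (star u ⬝ᵥ A *ᵥ v).re := rfl

lemma reMatrixForm_one_self [DecidableEq κ] (u : κ → ℂ) :
    reMatrixForm 1 u u = ∑ k, ‖u k‖ ^ 2 := by
  simp [reMatrixForm_apply, dotProduct, Complex.sq_norm, Complex.normSq_apply]

lemma reMatrixForm_comm {A : Matrix κ κ ℂ} (hA : A.IsHermitian) (u v : κ → ℂ) :
    reMatrixForm A u v = reMatrixForm A v u := by
  rw [reMatrixForm_apply, reMatrixForm_apply, star_dotProduct, star_mulVec, hA.eq,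
    ← dotProduct_mulVec, Complex.star_def, Complex.conj_re]

lemma abs_reMatrixForm_self_le [DecidableEq κ] {A : Matrix κ κ ℂ} (hA : A.IsHermitian)
    (hA2 : A * A = 1) (u : κ → ℂ) : |reMatrixForm A u u| ≤ reMatrixForm 1 u u := by
  have hone_nonneg (v : κ → ℂ) : 0 ≤ reMatrixForm 1 v v := by
    rw [reMatrixForm_one_self]
    positivity
  have hAA : reMatrixForm 1 (A *ᵥ u) (A *ᵥ u) = reMatrixForm 1 u u := by
    simp only [reMatrixForm_apply, one_mulVec, star_mulVec, hA.eq, ← dotProduct_mulVec,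
      mulVec_mulVec, one_mul, hA2]
  have hA_right : reMatrixForm 1 u (A *ᵥ u) = reMatrixForm A u u := by
    rw [reMatrixForm_apply, one_mulVec, reMatrixForm_apply]
  have hA_left : reMatrixForm 1 (A *ᵥ u) u = reMatrixForm A u u := by
    rw [reMatrixForm_comm isHermitian_one, hA_right]
  have hadd := hone_nonneg (u + A *ᵥ u)
  have hsub := hone_nonneg (u - A *ᵥ u)
  simp only [map_add, map_sub, _root_.add_apply, _root_.sub_apply, hAA, hA_right, hA_left]
    at hadd hsub
  exact abs_le.2 ⟨by linarith, by linarith⟩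

variable {E ι : Type*} [NormedAddCommGroup E] [NormedSpace ℝ E] [Fintype ι]

lemma fderiv_reMatrixForm_self {X : Type*} [NormedAddCommGroup X] [NormedSpace ℝ X]
    {A : Matrix κ κ ℂ} (hA : A.IsHermitian) {Ψ : X → κ → ℂ} {p : X}
    (hΨ : DifferentiableAt ℝ Ψ p) (u : X) :
    fderiv ℝ (fun q => reMatrixForm A (Ψ q) (Ψ q)) p u =
      2 * reMatrixForm A (Ψ p) (fderiv ℝ Ψ p u) := by
  rw [((reMatrixForm A).hasFDerivAt_of_bilinear hΨ.hasFDerivAt hΨ.hasFDerivAt).fderiv]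
  simp [reMatrixForm_comm hA (fderiv ℝ Ψ p u), two_mul]

/-- The Dirac equation `i ∂ₜΨ = -i ∑ₖ αₖ ∂_{v k}Ψ + U β Ψ` on spacetime, solved for the time
derivative. The scalar potential `U` comprises the mass and, for a nonlinear equation, the
self-interaction evaluated along the solution. -/
def IsDiracSolution (α : ι → Matrix κ κ ℂ) (β : Matrix κ κ ℂ) (U : ℝ × E → ℝ) (v : ι → E)
    (Ψ : ℝ × E → κ → ℂ) : Prop :=
  ∀ p, fderiv ℝ Ψ p (1, 0) =
    -(∑ k, α k *ᵥ fderiv ℝ Ψ p (0, v k)) - (Complex.I * U p) • (β *ᵥ Ψ p)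

theorem IsDiracSolution.isConservedCurrent [DecidableEq κ] {α : ι → Matrix κ κ ℂ}
    {β : Matrix κ κ ℂ} {U : ℝ × E → ℝ} {v : ι → E} {Ψ : ℝ × E → κ → ℂ}
    (h : IsDiracSolution α β U v Ψ) (hα : ∀ k, (α k).IsHermitian) (hα2 : ∀ k, α k * α k = 1)
    (hβ : β.IsHermitian) (hΨ : ContDiff ℝ 1 Ψ) :
    IsConservedCurrent v (fun p => reMatrixForm 1 (Ψ p) (Ψ p))
      (fun k p => reMatrixForm (α k) (Ψ p) (Ψ p)) where
  contDiff_density := by fun_prop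
  contDiff_flux k := by fun_prop
  density_nonneg p := by
    rw [reMatrixForm_one_self]
    positivity
  abs_flux_le k p := abs_reMatrixForm_self_le (hα k) (hα2 k) (Ψ p)
  continuity_eq p := by
    have hΨp : DifferentiableAt ℝ Ψ p := hΨ.differentiable one_ne_zero p
    simp only [fderiv_reMatrixForm_self isHermitian_one hΨp,
      fun k => fderiv_reMatrixForm_self (hα k) hΨp, h p]
    have hpotential : reMatrixForm 1 (Ψ p) ((Complex.I * U p) • (β *ᵥ Ψ p)) = 0 := by
      have him : (star (Ψ p) ⬝ᵥ β *ᵥ Ψ p).im = 0 := hβ.im_star_dotProduct_mulVec_self (Ψ p)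
      simp [reMatrixForm_apply, dotProduct_smul, mul_assoc, him]
    have hα_flux (k : ι) (u : κ → ℂ) :
        reMatrixForm 1 (Ψ p) (α k *ᵥ u) = reMatrixForm (α k) (Ψ p) u := by
      rw [reMatrixForm_apply, one_mulVec, reMatrixForm_apply]
    rw [map_sub, map_neg, map_sum, hpotential, ← Finset.mul_sum]
    simp only [hα_flux]
    ring

lemma isDiracSolution_of_componentwise [DecidableEq ι] {α : ι → Matrix κ κ ℂ} {β : Matrix κ κ ℂ}
    {U : ℝ → (ι → ℝ) → ℝ} {ψ : ℝ → (ι → ℝ) → κ → ℂ}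
    (hψ : Differentiable ℝ fun p : ℝ × (ι → ℝ) => ψ p.1 p.2)
    (heq : ∀ t x k, Complex.I * deriv (fun s => ψ s x k) t =
      -Complex.I * (∑ j, (α j *ᵥ fun l => fderiv ℝ (fun y => ψ t y l) x (Pi.single j 1)) k) +
        U t x * (β *ᵥ ψ t x) k) :
    IsDiracSolution α β (fun p => U p.1 p.2) (fun k => Pi.single k 1) fun p => ψ p.1 p.2 := by
  rintro ⟨t, x⟩
  ext k
  have htime : deriv (fun s => ψ s x k) t =
      fderiv ℝ (fun p : ℝ × (ι → ℝ) => ψ p.1 p.2) (t, x) (1, 0) k :=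
    (hasDerivAt_pi.1 ((hψ (t, x)).hasFDerivAt.comp_hasDerivAt t
      ((hasDerivAt_id t).prodMk (hasDerivAt_const t x))) k).deriv
  have hspace (j : ι) (l : κ) : fderiv ℝ (fun y => ψ t y l) x (Pi.single j 1) =
      fderiv ℝ (fun p : ℝ × (ι → ℝ) => ψ p.1 p.2) (t, x) (0, Pi.single j 1) l := by
    rw [fderiv_comp_prodMk_right (f := fun p : ℝ × (ι → ℝ) => ψ p.1 p.2 l) (by fun_prop),
      fderiv_apply (hψ (t, x))]
    rfl
  have hmul := congrArg (-Complex.I * ·) (heq t x k)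
  simp only [htime, hspace, ← mul_assoc, neg_mul, mul_add, mul_neg, Complex.I_mul_I, neg_neg,
    one_mul] at hmul
  simp only [hmul, Pi.sub_apply, Pi.neg_apply, Finset.sum_apply, Pi.smul_apply, smul_eq_mul]
  ring

end Dirac

section HyperbolicTangent

lemma hasDerivAt_tanh (r : ℝ) : HasDerivAt Real.tanh ((1 / Real.cosh r) ^ 2) r := by
  have hcosh : Real.cosh r ≠ 0 := (Real.cosh_pos r).ne'
  have hquot := (Real.hasDerivAt_sinh r).div (Real.hasDerivAt_cosh r) hcosh
  rw [show Real.sinh / Real.cosh = Real.tanh from (funext Real.tanh_eq_sinh_div_cosh).symm]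
    at hquot
  refine hquot.congr_deriv ?_
  rw [div_pow, one_pow, ← Real.cosh_sq_sub_sinh_sq r, ← sq, ← sq]

lemma continuous_sech_sq : Continuous fun r : ℝ => (1 / Real.cosh r) ^ 2 :=
  (continuous_const.div Real.continuous_cosh fun r => (Real.cosh_pos r).ne').pow 2

lemma sech_sq_le_one (r : ℝ) : (1 / Real.cosh r) ^ 2 ≤ 1 :=
  pow_le_one₀ (one_div_pos.2 (Real.cosh_pos r)).le
    ((div_le_one (Real.cosh_pos r)).2 (Real.one_le_cosh r))

end HyperbolicTangent

lemma integrable_sum_norm_apply_sq {X κ : Type*} [Fintype κ] [MeasurableSpace X] {μ : Measure X}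
    {F : κ → Type*} [∀ k, NormedAddCommGroup (F k)] {f : X → ∀ k, F k} (hf : MemLp f 2 μ) :
    Integrable (fun x => ∑ k, ‖f x k‖ ^ 2) μ :=
  integrable_finsetSum _ fun k _ => (hf.eval k).integrable_norm_pow two_ne_zero

theorem dirac_exterior_cone_virial_bound_general {ι κ : Type*} [Fintype ι] [DecidableEq ι]
    [Fintype κ] [DecidableEq κ] {α : ι → Matrix κ κ ℂ} {β : Matrix κ κ ℂ}
    (hα : ∀ j, (α j).IsHermitian) (hα2 : ∀ j, α j * α j = 1) (hβ : β.IsHermitian)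
    {U : ℝ → (ι → ℝ) → ℝ} {ψ : ℝ → (ι → ℝ) → κ → ℂ}
    (hψ : ContDiff ℝ 1 fun p : ℝ × (ι → ℝ) => ψ p.1 p.2)
    (hψ_charge : ∀ t, Integrable fun x => ∑ k, ‖ψ t x k‖ ^ 2)
    (heq : ∀ t x k, Complex.I * deriv (fun s => ψ s x k) t =
      -Complex.I * (∑ j, (α j *ᵥ fun l => fderiv ℝ (fun y => ψ t y l) x (Pi.single j 1)) k) +
        U t x * (β *ᵥ ψ t x) k)
    {lam : ℝ} (hlam : 0 < lam) (b t : ℝ) :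
    ∃ d, HasDerivAt (fun s => ∫ x, (∑ j, Real.tanh ((x j + s * (-(1 + b))) / lam)) *
        ∑ k, ‖ψ s x k‖ ^ 2) d t ∧
      d ≤ -(b / lam) * ∑ j, ∫ x, (1 / Real.cosh ((x j - (1 + b) * t) / lam)) ^ 2 *
        ∑ k, ‖ψ t x k‖ ^ 2 := by
  have hcurrent := (isDiracSolution_of_componentwise (hψ.differentiable one_ne_zero)
    heq).isConservedCurrent hα hα2 hβ hψ
  simp only [reMatrixForm_one_self] at hcurrent
  have hshift (s : ℝ) (x : ι → ℝ) (j : ι) : x j + s * (-(1 + b)) = x j - (1 + b) * s := by ring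
  simp only [hshift]
  exact ⟨_, hcurrent.hasDerivAt_integral_sum_comp_shift_mul hψ_charge hasDerivAt_tanh
      continuous_sech_sq (fun r => (Real.abs_tanh_lt_one r).le)
      (fun r => (abs_of_nonneg (sq_nonneg _)).trans_le (sech_sq_le_one r)) lam (1 + b) t,
    hcurrent.integral_sum_mul_flux_sub_le (hψ_charge t)
      (fun j => continuous_sech_sq.comp (by fun_prop)) (fun j x => sq_nonneg _)
      (fun j x => sech_sq_le_one _) hlam b⟩

/-- The weighted-charge inequality of Section 4 (`eq:dtI_bound`): with the weight
`ϕ(x) = Σ_j tanh x_j` translated at speed `−(1+b)` in every coordinate, the functional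
`I(t)` has derivative bounded by `−(b/λ) Σ_j ∫ sech²((x_j−(1+b)t)/λ) |ψ|²`. -/
theorem dirac_exterior_cone_virial_bound
    (n N : ℕ) (hn : 1 ≤ n) (hN : 1 ≤ N) (m : ℝ)
    (α : Fin n → Matrix (Fin N) (Fin N) ℂ) (β : Matrix (Fin N) (Fin N) ℂ)
    (hαherm : ∀ j, (α j).IsHermitian) (hβherm : β.IsHermitian)
    (hanticomm : ∀ j k : Fin n,
      α j * α k + α k * α j = if j = k then (2 : ℂ) • (1 : Matrix (Fin N) (Fin N) ℂ) else 0)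
    (hαβ : ∀ j, α j * β + β * α j = 0)
    (hβ2 : β * β = 1)
    (V : (Fin n → ℝ) → (Fin N → ℂ) → ℝ)
    (ψ : ℝ → (Fin n → ℝ) → (Fin N → ℂ))
    (hψ : ContDiff ℝ (⊤ : ℕ∞) (fun p : ℝ × (Fin n → ℝ) => ψ p.1 p.2))
    (hψS : ∀ t : ℝ, ∃ f : SchwartzMap (Fin n → ℝ) (Fin N → ℂ), ∀ x, f x = ψ t x)
    (heq : ∀ (t : ℝ) (x : Fin n → ℝ) (k : Fin N),
      Complex.I * deriv (fun s => ψ s x k) t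
        = -Complex.I *
            (∑ j : Fin n,
              ((α j) *ᵥ (fun l => fderiv ℝ (fun y => ψ t y l) x (Pi.single j 1))) k)
          + ((m + V x (ψ t x) : ℝ) : ℂ) * ((β *ᵥ ψ t x) k))
    (lam b : ℝ) (hlam : 0 < lam) (hb : 0 < b) :
    ∀ t : ℝ, ∃ d : ℝ,
      HasDerivAt
        (fun s : ℝ =>
          ∫ (x : Fin n → ℝ),
            (∑ j : Fin n, Real.tanh ((x j + s * (-(1 + b))) / lam))
              * (∑ k : Fin N, ‖ψ s x k‖ ^ 2)) d t
      ∧ d ≤ -(b / lam) *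
          ∑ j : Fin n, ∫ (x : Fin n → ℝ),
            (1 / Real.cosh ((x j - (1 + b) * t) / lam)) ^ 2
              * (∑ k : Fin N, ‖ψ t x k‖ ^ 2) := by
  have hα2 (j : Fin n) : α j * α j = 1 := smul_right_injective _ (two_ne_zero' ℂ)
    ((two_smul ℂ (α j * α j)).trans ((hanticomm j j).trans (if_pos rfl)))
  refine dirac_exterior_cone_virial_bound_general (U := fun t x => m + V x (ψ t x)) hαherm hα2
    hβherm (hψ.of_le (by exact_mod_cast le_top)) (fun t => ?_) heq hlam b
  obtain ⟨f, hf⟩ := hψS t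
  simpa only [hf] using integrable_sum_norm_apply_sq (f.memLp 2)
end
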